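/- As the real variable x tends to 0, (1/8)·∑_{n=0}^∞ (−1)^n · 2^{−2(n+x)} · (1/2)_{n+x} (1/4)_{n+x} (3/4)_{n+x} / (1)_{n+x}³ · (20(n+x)+3) = 1/π − (3/2)π x² + 32 G x³ + O(x⁴), where G is Catalan's constant; in particular the coefficients of x⁰, x¹, x², x³ in the expansion are 1/π, 0, −(3/2)π, 32G respectively. -/

import Mathlib

/-- The Pochhammer symbol for real index: `(a)_t = Γ(a+t)/Γ(a)`. -/
noncomputable def pochG (a t : ℝ) : ℝ := Real.Gamma (a + t) / Real.Gamma a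

/-- Catalan's constant `G = ∑_{n≥0} (-1)^n/(2n+1)²`. -/
noncomputable def catalan' : ℝ := ∑' n : ℕ, (-1 : ℝ) ^ n / (2 * (n : ℝ) + 1) ^ 2

section

open Real Filter Topology MeasureTheory Asymptotics

theorem prod_range_add_eq_Gamma_div {a : ℝ} (ha : 0 < a) (n : ℕ) :
    ∏ j ∈ Finset.range n, (a + j) = Gamma (a + n) / Gamma a := by
  induction n with
  | zero => simp [(Gamma_pos_of_pos ha).ne']
  | succ n ih =>
    have h : Gamma (a + (n + 1 : ℕ)) = (a + n) * Gamma (a + n) := by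
      rw [← Gamma_add_one (by positivity)]; push_cast; ring_nf
    rw [Finset.prod_range_succ, ih, h]; ring

theorem tendsto_Gamma_nat_add_div_of_pos {a : ℝ} (ha : 0 < a) :
    Tendsto (fun n : ℕ => Gamma (n + a) / (n.factorial * (n : ℝ) ^ (a - 1))) atTop (𝓝 1) := by
  have hG := (Gamma_pos_of_pos ha).ne'
  have h1 := ((GammaSeq_tendsto_Gamma a).div_const (Gamma a)).inv₀ (by simp [hG])
  rw [div_self hG, inv_one] at h1
  have h2 : Tendsto (fun n : ℕ => (n : ℝ) / (n + a)) atTop (𝓝 1) :=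
    tendsto_natCast_div_add_atTop a
  have h3 := h1.mul h2
  rw [mul_one] at h3
  refine h3.congr' ?_
  filter_upwards [eventually_gt_atTop 0] with n hn
  have hn' : (0 : ℝ) < n := by exact_mod_cast hn
  have hna : (0 : ℝ) < n + a := by positivity
  rw [GammaSeq, prod_range_add_eq_Gamma_div ha]
  have h : Gamma (a + (n + 1 : ℕ)) = (n + a) * Gamma (n + a) := by
    rw [← Gamma_add_one hna.ne']; push_cast; ring_nf
  have hG2 := (Gamma_pos_of_pos hna).ne'
  rw [h, rpow_sub hn', rpow_one]
  have : (n : ℝ) ^ a ≠ 0 := (rpow_pos_of_pos hn' a).ne'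
  have : (n.factorial : ℝ) ≠ 0 := by positivity
  field_simp

theorem tendsto_Gamma_nat_add_div (a : ℝ) :
    Tendsto (fun n : ℕ => Gamma (n + a) / (n.factorial * (n : ℝ) ^ (a - 1))) atTop (𝓝 1) := by
  obtain ⟨m, hm⟩ := exists_nat_gt (-a)
  induction m generalizing a with
  | zero => exact tendsto_Gamma_nat_add_div_of_pos (by simpa using hm)
  | succ m ih =>
    have h1 := ih (a + 1) (by push_cast at hm; linarith)
    have h2 : Tendsto (fun n : ℕ => (n : ℝ) / (n + a)) atTop (𝓝 1) :=
      tendsto_natCast_div_add_atTop a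
    have h3 := h1.mul h2
    rw [mul_one] at h3
    refine h3.congr' ?_
    have ht : ∀ᶠ n : ℕ in atTop, -a < (n : ℝ) := tendsto_natCast_atTop_atTop.eventually_gt_atTop _
    filter_upwards [eventually_gt_atTop 0, ht] with n hn hna
    have hn' : (0 : ℝ) < n := by exact_mod_cast hn
    have hna : (0 : ℝ) < n + a := by linarith
    rw [← add_assoc, Gamma_add_one hna.ne', rpow_sub hn', rpow_sub hn', rpow_add hn', rpow_one]
    have : (n : ℝ) ^ a ≠ 0 := (rpow_pos_of_pos hn' a).ne'
    have : (n.factorial : ℝ) ≠ 0 := by positivity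
    field_simp

/-- `Γ(n+a)/Γ(n+b) ~ n^(a-b)`. -/
theorem tendsto_Gamma_ratio (a b : ℝ) :
    Tendsto (fun n : ℕ => Gamma (n + a) / Gamma (n + b) * (n : ℝ) ^ (b - a)) atTop (𝓝 1) := by
  have h := (tendsto_Gamma_nat_add_div a).div (tendsto_Gamma_nat_add_div b) one_ne_zero
  rw [div_one] at h
  refine h.congr' ?_
  filter_upwards [eventually_gt_atTop 0] with n hn
  have hn' : (0 : ℝ) < n := by exact_mod_cast hn
  rw [Pi.div_apply, rpow_sub hn', rpow_sub hn', rpow_sub hn', rpow_one]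
  have : (n : ℝ) ^ a ≠ 0 := (rpow_pos_of_pos hn' a).ne'
  have : (n : ℝ) ^ b ≠ 0 := (rpow_pos_of_pos hn' b).ne'
  have : (n.factorial : ℝ) ≠ 0 := by positivity
  field_simp

theorem tendsto_Gamma_ratio_mul_rpow (a b c d : ℝ) :
    Tendsto (fun n : ℕ => Gamma (n + a) * Gamma (n + b) / (Gamma (n + c) * Gamma (n + d)) *
      (n : ℝ) ^ (c + d - a - b)) atTop (𝓝 1) := by
  have h := (tendsto_Gamma_ratio a c).mul (tendsto_Gamma_ratio b d)
  rw [mul_one] at h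
  refine h.congr' ?_
  filter_upwards [eventually_gt_atTop 0] with n hn
  have hn' : (0 : ℝ) < n := by exact_mod_cast hn
  rw [show c + d - a - b = (c - a) + (d - b) by ring, rpow_add hn', mul_mul_mul_comm,
    div_mul_div_comm]

/-- Products of two balanced Gamma ratios tend to one. -/
theorem tendsto_Gamma_ratio_mul {a b c d : ℝ} (h : a + b = c + d) :
    Tendsto (fun n : ℕ => Gamma (n + a) * Gamma (n + b) / (Gamma (n + c) * Gamma (n + d)))
      atTop (𝓝 1) := by
  have h1 := tendsto_Gamma_ratio_mul_rpow a b c d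
  rw [show c + d - a - b = 0 by linarith] at h1
  simpa using h1

/-- `Γ(n+a)Γ(n+b)/(Γ(n+c)Γ(n+d))` is summable when `c + d - a - b > 1`. -/
theorem summable_Gamma_ratio {a b c d : ℝ} (h : 1 < c + d - a - b) :
    Summable (fun n : ℕ => Gamma (n + a) * Gamma (n + b) / (Gamma (n + c) * Gamma (n + d))) := by
  have h1 := (tendsto_Gamma_ratio_mul_rpow a b c d).isBigO_one ℝ
  have h2 : Summable (fun n : ℕ => (n : ℝ) ^ (-(c + d - a - b))) :=
    summable_nat_rpow.2 (by linarith)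
  refine summable_of_isBigO_nat h2 ?_
  have h3 := h1.mul (Asymptotics.isBigO_refl (fun n : ℕ => (n : ℝ) ^ (-(c + d - a - b))) atTop)
  simp only [one_mul] at h3
  refine h3.congr' ?_ (EventuallyEq.refl _ _)
  filter_upwards [eventually_gt_atTop 0] with n hn
  have hn' : (0 : ℝ) < n := by exact_mod_cast hn
  rw [mul_assoc, ← rpow_add hn', add_neg_cancel, rpow_zero, mul_one]

theorem tendsto_Gamma_ratio_zero {a b c d : ℝ} (h : 0 < c + d - a - b) :
    Tendsto (fun n : ℕ => Gamma (n + a) * Gamma (n + b) / (Gamma (n + c) * Gamma (n + d)))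
      atTop (𝓝 0) := by
  have h1 := (tendsto_Gamma_ratio_mul_rpow a b c d).mul
    ((tendsto_rpow_neg_atTop h).comp tendsto_natCast_atTop_atTop)
  rw [mul_zero] at h1
  refine h1.congr' ?_
  filter_upwards [eventually_gt_atTop 0] with n hn
  have hn' : (0 : ℝ) < n := by exact_mod_cast hn
  rw [Function.comp_apply, mul_assoc, ← rpow_add hn', add_neg_cancel, rpow_zero, mul_one]

/-- Terms of the auxiliary series. -/
noncomputable def auxTerm (x : ℝ) (k : ℕ) : ℝ :=
  Gamma (k + 1 / 2) * Gamma (k + (1 / 2 + x)) / (Gamma (k + (1 + 2 * x)) * Gamma (k + (1 + x)))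

/-- The Gamma factor multiplying the auxiliary series. -/
noncomputable def auxFactor (x : ℝ) : ℝ :=
  Gamma (1 / 2 + 2 * x) * Gamma (1 / 2 + x) ^ 2 / Gamma (2 * x)

/-- The companion of `auxFactor x * auxTerm x k` in a Wilf–Zeilberger pair. -/
noncomputable def wzCompanion (x : ℝ) (k : ℕ) : ℝ :=
  auxFactor x * auxTerm x k *
    (((20 * x + 3) * (2 * x + 1) + 2 * (16 * x + 5) * k + 8 * k ^ 2) / (16 * x * (1 + 2 * x + k)))

theorem auxTerm_pos {x : ℝ} (hx : 0 ≤ x) (k : ℕ) : 0 < auxTerm x k := by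
  unfold auxTerm
  have h1 := Gamma_pos_of_pos (show (0 : ℝ) < k + 1 / 2 by positivity)
  have h2 := Gamma_pos_of_pos (show (0 : ℝ) < k + (1 / 2 + x) by positivity)
  have h3 := Gamma_pos_of_pos (show (0 : ℝ) < k + (1 + 2 * x) by positivity)
  have h4 := Gamma_pos_of_pos (show (0 : ℝ) < k + (1 + x) by positivity)
  positivity

theorem auxFactor_pos {x : ℝ} (hx : 0 < x) : 0 < auxFactor x := by
  unfold auxFactor
  have h1 := Gamma_pos_of_pos (show (0 : ℝ) < 1 / 2 + 2 * x by positivity)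
  have h2 := Gamma_pos_of_pos (show (0 : ℝ) < 1 / 2 + x by positivity)
  have h3 := Gamma_pos_of_pos (show (0 : ℝ) < 2 * x by positivity)
  positivity

theorem summable_auxTerm {x : ℝ} (hx : 0 < x) : Summable (auxTerm x) :=
  summable_Gamma_ratio (by linarith)

theorem auxTerm_succ {x : ℝ} (hx : 0 ≤ x) (k : ℕ) :
    auxTerm x (k + 1) = auxTerm x k *
      ((k + 1 / 2) * (k + (1 / 2 + x)) / ((k + (1 + 2 * x)) * (k + (1 + x)))) := by
  unfold auxTerm
  have e1 : Gamma (((k + 1 : ℕ) : ℝ) + 1 / 2) = (k + 1 / 2) * Gamma (k + 1 / 2) := by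
    rw [← Gamma_add_one (by positivity)]; push_cast; ring_nf
  have e2 : Gamma (((k + 1 : ℕ) : ℝ) + (1 / 2 + x)) = (k + (1 / 2 + x)) * Gamma (k + (1 / 2 + x)) := by
    rw [← Gamma_add_one (by positivity)]; push_cast; ring_nf
  have e3 : Gamma (((k + 1 : ℕ) : ℝ) + (1 + 2 * x)) =
      (k + (1 + 2 * x)) * Gamma (k + (1 + 2 * x)) := by
    rw [← Gamma_add_one (by positivity)]; push_cast; ring_nf
  have e4 : Gamma (((k + 1 : ℕ) : ℝ) + (1 + x)) = (k + (1 + x)) * Gamma (k + (1 + x)) := by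
    rw [← Gamma_add_one (by positivity)]; push_cast; ring_nf
  rw [e1, e2, e3, e4, div_mul_div_comm]
  ring_nf

theorem auxTerm_add_one {x : ℝ} (hx : 0 < x) (k : ℕ) :
    auxTerm (x + 1) k = auxTerm x k *
      ((k + (1 / 2 + x)) / ((k + (1 + 2 * x)) * (k + (2 + 2 * x)) * (k + (1 + x)))) := by
  unfold auxTerm
  have e2 : Gamma ((k : ℝ) + (1 / 2 + (x + 1))) = (k + (1 / 2 + x)) * Gamma (k + (1 / 2 + x)) := by
    rw [← Gamma_add_one (by positivity)]; ring_nf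
  have e3 : Gamma ((k : ℝ) + (1 + 2 * (x + 1))) =
      (k + (2 + 2 * x)) * ((k + (1 + 2 * x)) * Gamma (k + (1 + 2 * x))) := by
    rw [← Gamma_add_one (by positivity), show (k : ℝ) + (1 + 2 * x) + 1 = k + (2 + 2 * x) by ring,
      ← Gamma_add_one (by positivity)]; ring_nf
  have e4 : Gamma ((k : ℝ) + (1 + (x + 1))) = (k + (1 + x)) * Gamma (k + (1 + x)) := by
    rw [← Gamma_add_one (by positivity)]; ring_nf
  rw [e2, e3, e4, div_mul_div_comm]
  ring_nf

theorem auxFactor_add_one {x : ℝ} (hx : 0 < x) :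
    auxFactor (x + 1) = auxFactor x *
      ((1 / 2 + 2 * x) * (3 / 2 + 2 * x) * (1 / 2 + x) ^ 2 / (2 * x * (2 * x + 1))) := by
  unfold auxFactor
  have e1 : Gamma (1 / 2 + 2 * (x + 1)) =
      (3 / 2 + 2 * x) * ((1 / 2 + 2 * x) * Gamma (1 / 2 + 2 * x)) := by
    rw [← Gamma_add_one (by positivity), show 1 / 2 + 2 * x + 1 = 3 / 2 + 2 * x by ring,
      ← Gamma_add_one (by positivity)]; ring_nf
  have e2 : Gamma (1 / 2 + (x + 1)) = (1 / 2 + x) * Gamma (1 / 2 + x) := by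
    rw [← Gamma_add_one (by positivity)]; ring_nf
  have e3 : Gamma (2 * (x + 1)) = (2 * x + 1) * (2 * x * Gamma (2 * x)) := by
    rw [← Gamma_add_one (by positivity), ← Gamma_add_one (by positivity)]; ring_nf
  rw [e1, e2, e3, div_mul_div_comm]
  ring_nf

theorem wz_identity {x : ℝ} (hx : 0 < x) (k : ℕ) :
    auxFactor (x + 1) * auxTerm (x + 1) k + auxFactor x * auxTerm x k =
      wzCompanion x k - wzCompanion x (k + 1) := by
  unfold wzCompanion
  rw [auxFactor_add_one hx, auxTerm_add_one hx, auxTerm_succ hx.le]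
  have : (0 : ℝ) < k + (1 + 2 * x) := by positivity
  have : (0 : ℝ) < k + 2 * (1 + x) := by positivity
  have : (0 : ℝ) < k + (1 + x) := by positivity
  push_cast
  rw [show (1 : ℝ) + 2 * x + (k + 1) = k + (2 + 2 * x) by ring,
    show (1 : ℝ) + 2 * x + k = k + (1 + 2 * x) by ring]
  generalize auxFactor x = m
  generalize auxTerm x k = t
  generalize (k : ℝ) = k at *
  field_simp
  ring

theorem tendsto_wzCompanion {x : ℝ} (hx : 0 < x) :
    Tendsto (wzCompanion x) atTop (𝓝 0) := by
  have h0 : Tendsto (fun k : ℕ => Gamma (k + 1 / 2) * Gamma (k + (1 / 2 + x)) /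
      (Gamma (k + 2 * x) * Gamma (k + (1 + x)))) atTop (𝓝 0) :=
    tendsto_Gamma_ratio_zero (by linarith)
  have h1 : Tendsto (fun k : ℕ => (k : ℝ)⁻¹) atTop (𝓝 0) := tendsto_inv_atTop_nhds_zero_nat
  have h2 : Tendsto (fun k : ℕ => auxFactor x * (((20 * x + 3) * (2 * x + 1) * (k : ℝ)⁻¹ ^ 2
      + 2 * (16 * x + 5) * (k : ℝ)⁻¹ + 8) / (16 * x * ((1 + 2 * x) * (k : ℝ)⁻¹ + 1) *
        (2 * x * (k : ℝ)⁻¹ + 1)))) atTop (𝓝 (auxFactor x * (((20 * x + 3) * (2 * x + 1) * 0 ^ 2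
      + 2 * (16 * x + 5) * 0 + 8) / (16 * x * ((1 + 2 * x) * 0 + 1) * (2 * x * 0 + 1))))) := by
    refine tendsto_const_nhds.mul (Tendsto.div ?_ ?_ (by simp [hx.ne']))
    · exact ((tendsto_const_nhds.mul (h1.pow 2)).add (tendsto_const_nhds.mul h1)).add_const _
    · exact (tendsto_const_nhds.mul ((tendsto_const_nhds.mul h1).add_const _)).mul
        ((tendsto_const_nhds.mul h1).add_const _)
  have h3 := h0.mul h2
  rw [zero_mul] at h3
  refine h3.congr' ?_
  filter_upwards [eventually_gt_atTop 0] with n hn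
  have hn' : (0 : ℝ) < n := by exact_mod_cast hn
  unfold wzCompanion auxTerm
  have e3 : Gamma ((n : ℝ) + (1 + 2 * x)) = (n + 2 * x) * Gamma (n + 2 * x) := by
    rw [← Gamma_add_one (by positivity)]; ring_nf
  rw [e3]
  have h3 := (Gamma_pos_of_pos (show (0 : ℝ) < n + 2 * x by positivity)).ne'
  have h4 := (Gamma_pos_of_pos (show (0 : ℝ) < n + (1 + x) by positivity)).ne'
  have : (0 : ℝ) < 1 + 2 * x + n := by positivity
  generalize Gamma ((n : ℝ) + 2 * x) = u at *
  generalize Gamma ((n : ℝ) + (1 + x)) = v at *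
  generalize Gamma ((n : ℝ) + (1 / 2 + x)) = w at *
  generalize Gamma ((n : ℝ) + 1 / 2) = y at *
  generalize auxFactor x = m
  field_simp
  ring

theorem auxSum_recursion {x : ℝ} (hx : 0 < x) :
    auxFactor (x + 1) * (∑' k, auxTerm (x + 1) k) + auxFactor x * (∑' k, auxTerm x k) =
      wzCompanion x 0 := by
  have h1 := ((summable_auxTerm (show 0 < x + 1 by linarith)).hasSum.mul_left
    (auxFactor (x + 1))).add ((summable_auxTerm hx).hasSum.mul_left (auxFactor x))
  have h2 := h1.tendsto_sum_nat
  simp only [wz_identity hx, Finset.sum_range_sub'] at h2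
  have h3 := (tendsto_wzCompanion hx).const_sub (wzCompanion x 0)
  rw [sub_zero] at h3
  exact tendsto_nhds_unique h2 h3

/-- The summand of the series, without its sign. -/
theorem wzCompanion_zero {x : ℝ} (hx : 0 < x) :
    wzCompanion x 0 = π ^ 2 * √π / 8 * ((2 : ℝ) ^ (-(2 : ℝ) * x) *
      ((Gamma (1 / 2 + x) / Gamma (1 / 2)) * (Gamma (1 / 4 + x) / Gamma (1 / 4)) *
        (Gamma (3 / 4 + x) / Gamma (3 / 4)) / (Gamma (1 + x) / Gamma 1) ^ 3) * (20 * x + 3)) := by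
  have d1 := Gamma_mul_Gamma_add_half (1 / 4 + x)
  have d2 := Gamma_mul_Gamma_add_half (1 / 4)
  have d3 := Gamma_mul_Gamma_add_half (1 / 2 + x)
  have e : Gamma (1 + 2 * x) = 2 * x * Gamma (2 * x) := by
    rw [← Gamma_add_one (by positivity)]; ring_nf
  rw [show 1 / 4 + x + 1 / 2 = 3 / 4 + x by ring, show 2 * (1 / 4 + x) = 1 / 2 + 2 * x by ring,
    show 1 - (1 / 2 + 2 * x) = 1 / 2 - 2 * x by ring] at d1
  rw [show (1 / 4 + 1 / 2 : ℝ) = 3 / 4 by norm_num, show (2 * (1 / 4) : ℝ) = 1 / 2 by norm_num,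
    show (1 - 1 / 2 : ℝ) = 1 / 2 by norm_num, Gamma_one_half_eq] at d2
  rw [show 1 / 2 + x + 1 / 2 = 1 + x by ring, show 2 * (1 / 2 + x) = 1 + 2 * x by ring,
    show 1 - (1 + 2 * x) = -2 * x by ring, e] at d3
  rw [rpow_sub two_pos] at d1
  rw [show (2 : ℝ) * x = -(-2 * x) by ring, rpow_neg two_pos.le,
    ← show (2 : ℝ) * x = -(-2 * x) by ring] at d1
  unfold wzCompanion auxFactor auxTerm
  simp only [Nat.cast_zero, zero_add]
  rw [e, Gamma_one_half_eq, Gamma_one]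
  have p1 := Gamma_pos_of_pos (show (0 : ℝ) < 1 / 4 by positivity)
  have p2 := Gamma_pos_of_pos (show (0 : ℝ) < 3 / 4 by positivity)
  have p3 := Gamma_pos_of_pos (show (0 : ℝ) < 1 + x by positivity)
  have p4 := Gamma_pos_of_pos (show (0 : ℝ) < 2 * x by positivity)
  have p5 := Gamma_pos_of_pos (show (0 : ℝ) < 1 / 2 + x by positivity)
  have p6 : 0 < (2 : ℝ) ^ (-2 * x) := rpow_pos_of_pos two_pos _
  have p7 : 0 < (2 : ℝ) ^ (1 / 2 : ℝ) := rpow_pos_of_pos two_pos _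
  have p8 : 0 < √π := sqrt_pos.2 pi_pos
  have p9 : π = √π * √π := (mul_self_sqrt pi_pos.le).symm
  have q : Gamma (2 * x) = Gamma (1 / 2 + x) * Gamma (1 + x) / (2 * x * (2 : ℝ) ^ (-2 * x) * √π) := by
    rw [d3]; field_simp
  have q1 : (Gamma (1 / 4 + x) / Gamma (1 / 4)) * (Gamma (3 / 4 + x) / Gamma (3 / 4)) =
      Gamma (1 / 2 + 2 * x) * (2 : ℝ) ^ (-2 * x) / √π := by
    rw [div_mul_div_comm, d1, d2]; field_simp
  rw [mul_assoc (Gamma (1 / 2 + x) / √π), q1, q]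
  rw [show π ^ 2 = (√π * √π) ^ 2 by rw [← p9]]
  generalize Gamma (1 + x) = u at *
  generalize Gamma (1 / 2 + x) = v at *
  generalize Gamma (1 / 2 + 2 * x) = w at *
  generalize (2 : ℝ) ^ (-2 * x) = y at *
  generalize √π = z at *
  have : (0 : ℝ) < 1 + 2 * x := by positivity
  field_simp
  ring

theorem hasSum_wzCompanion {x : ℝ} (hx : 0 < x)
    (hs : Summable (fun n : ℕ => (-1 : ℝ) ^ n * wzCompanion (n + x) 0)) :
    HasSum (fun n : ℕ => (-1 : ℝ) ^ n * wzCompanion (n + x) 0)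
      (auxFactor x * ∑' k, auxTerm x k) := by
  set H : ℕ → ℝ := fun n => auxFactor (n + x) * ∑' k, auxTerm (n + x) k with hH
  have hpos : ∀ n : ℕ, 0 < (n : ℝ) + x := fun n => by positivity
  have hH0 : ∀ n, 0 ≤ H n := fun n => mul_nonneg (auxFactor_pos (hpos n)).le
    (tsum_nonneg fun k => (auxTerm_pos (hpos n).le k).le)
  have hrec : ∀ n : ℕ, H (n + 1) + H n = wzCompanion (n + x) 0 := fun n => by
    rw [← auxSum_recursion (hpos n), hH]
    simp only [Nat.cast_add, Nat.cast_one]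
    rw [show (n : ℝ) + 1 + x = n + x + 1 by ring]
  have hpart : ∀ m : ℕ, ∑ n ∈ Finset.range m, (-1 : ℝ) ^ n * wzCompanion (n + x) 0 =
      H 0 - (-1) ^ m * H m := fun m => by
    induction m with
    | zero => simp
    | succ m ih => rw [Finset.sum_range_succ, ih, ← hrec]; ring
  have hlim : Tendsto (fun m : ℕ => (-1 : ℝ) ^ m * H m) atTop (𝓝 0) := by
    refine squeeze_zero_norm (fun m => ?_)
      (tendsto_zero_iff_norm_tendsto_zero.1 hs.tendsto_atTop_zero)
    rw [← hrec, norm_mul, norm_of_nonneg (hH0 m), norm_mul,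
      norm_of_nonneg (add_nonneg (hH0 _) (hH0 m))]
    exact mul_le_mul_of_nonneg_left (by linarith [hH0 (m + 1)]) (norm_nonneg _)
  have h1 := hs.hasSum.tendsto_sum_nat
  simp only [hpart] at h1
  have h2 := hlim.const_sub (H 0)
  have h3 := tendsto_nhds_unique h1 h2
  have h4 : H 0 = auxFactor x * ∑' k, auxTerm x k := by simp [hH]
  rw [← h4, ← sub_zero (H 0), ← h3]
  exact hs.hasSum

theorem intervalIntegrable_two_cos_rpow_half {p : ℝ} (hp : -1 < p) :
    IntervalIntegrable (fun θ : ℝ => (2 * cos θ) ^ p) volume 0 (π / 2) := by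
  rcases le_or_gt 0 p with h | h
  · exact ((continuous_const.mul continuous_cos).rpow_const fun _ => Or.inr h).intervalIntegrable _ _
  have h1 : IntervalIntegrable (fun θ : ℝ => θ ^ p) volume 0 (π / 2) :=
    intervalIntegral.intervalIntegrable_rpow' hp
  have h2 := ((h1.comp_sub_left (π / 2)).const_mul ((4 / π) ^ p)).symm
  rw [sub_self, sub_zero] at h2
  refine h2.mono_fun (Measurable.aestronglyMeasurable (by fun_prop)) ?_
  refine (ae_restrict_iff' measurableSet_uIoc).2 (Eventually.of_forall fun θ hθ => ?_)
  rw [Set.uIoc_of_le (by positivity)] at hθ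
  have hc : 1 - 2 / π * θ ≤ cos θ := one_sub_mul_le_cos hθ.1.le hθ.2
  have e : 1 - 2 / π * θ = 2 / π * (π / 2 - θ) := by field_simp
  have h3 : 0 ≤ π / 2 - θ := by linarith [hθ.2]
  have h4 : 0 ≤ cos θ := cos_nonneg_of_neg_pi_div_two_le_of_le (by linarith [hθ.1, pi_pos]) hθ.2
  beta_reduce
  rw [norm_of_nonneg (by positivity), norm_of_nonneg (by positivity),
    ← mul_rpow (by positivity) h3]
  rcases hθ.2.eq_or_lt with h5 | h5
  · simp [h5, zero_rpow h.ne]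
  · refine rpow_le_rpow_of_nonpos (mul_pos (by positivity) (by linarith)) ?_ h.le
    rw [e] at hc
    calc 4 / π * (π / 2 - θ) = 2 * (2 / π * (π / 2 - θ)) := by ring
      _ ≤ _ := by linarith

theorem intervalIntegrable_two_cos_rpow_half_neg {p : ℝ} (hp : -1 < p) :
    IntervalIntegrable (fun θ : ℝ => (2 * cos θ) ^ p) volume (-(π / 2)) 0 := by
  have h := (IntervalIntegrable.iff_comp_neg (by simp)).1 (intervalIntegrable_two_cos_rpow_half hp)
  simpa using h.symm

theorem intervalIntegrable_two_cos_rpow {p : ℝ} (hp : -1 < p) :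
    IntervalIntegrable (fun θ : ℝ => (2 * cos θ) ^ p) volume (-(π / 2)) (π / 2) :=
  (intervalIntegrable_two_cos_rpow_half_neg hp).trans (intervalIntegrable_two_cos_rpow_half hp)

/-- Cauchy's cosine integral. -/
noncomputable def cosIntegral (p q : ℝ) : ℝ := ∫ θ in (0 : ℝ)..π / 2, (2 * cos θ) ^ p * cos (q * θ)

theorem intervalIntegrable_cosIntegrand {p : ℝ} (hp : -1 < p) (q : ℝ) :
    IntervalIntegrable (fun θ : ℝ => (2 * cos θ) ^ p * cos (q * θ)) volume 0 (π / 2) :=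
  (intervalIntegrable_two_cos_rpow_half hp).mul_continuousOn (by fun_prop)

theorem cosIntegral_recursion {p : ℝ} (hp : -1 < p) (q : ℝ) :
    ((p + 2) ^ 2 - q ^ 2) * cosIntegral (p + 2) q = 4 * (p + 1) * (p + 2) * cosIntegral p q := by
  have key := intervalIntegral.integral_eq_sub_of_hasDerivAt_of_le (a := 0) (b := π / 2)
    (f := fun θ => 2 * (p + 2) * (sin θ * (2 * cos θ) ^ (p + 1) * cos (q * θ)) -
      q * ((2 * cos θ) ^ (p + 2) * sin (q * θ)))
    (f' := fun θ => ((p + 2) ^ 2 - q ^ 2) * ((2 * cos θ) ^ (p + 2) * cos (q * θ)) -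
      4 * (p + 1) * (p + 2) * ((2 * cos θ) ^ p * cos (q * θ))) (by positivity) ?_ ?_ ?_
  · rw [intervalIntegral.integral_sub, intervalIntegral.integral_const_mul,
      intervalIntegral.integral_const_mul] at key
    · simp only [cos_pi_div_two, mul_zero, sin_zero, zero_mul, sub_self] at key
      rw [zero_rpow (by linarith), zero_rpow (by linarith)] at key
      simp only [mul_zero, zero_mul, sub_self] at key
      unfold cosIntegral
      linarith
    · exact (intervalIntegrable_cosIntegrand (by linarith) q).const_mul _
    · exact (intervalIntegrable_cosIntegrand hp q).const_mul _
  · have h1 : Continuous fun θ : ℝ => (2 * cos θ) ^ (p + 1) :=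
      (continuous_const.mul continuous_cos).rpow_const fun _ => Or.inr (by linarith)
    have h2 : Continuous fun θ : ℝ => (2 * cos θ) ^ (p + 2) :=
      (continuous_const.mul continuous_cos).rpow_const fun _ => Or.inr (by linarith)
    exact Continuous.continuousOn (by fun_prop)
  · intro θ hθ
    have hc : 0 < 2 * cos θ :=
      mul_pos two_pos (cos_pos_of_mem_Ioo ⟨by linarith [hθ.1, pi_pos], hθ.2⟩)
    have d0 : HasDerivAt (fun θ : ℝ => 2 * cos θ) (2 * -sin θ) θ := (hasDerivAt_cos θ).const_mul 2
    have d1 := d0.rpow_const (p := p + 1) (Or.inl hc.ne')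
    have d2 := d0.rpow_const (p := p + 2) (Or.inl hc.ne')
    have dq : HasDerivAt (fun θ : ℝ => q * θ) q θ := by
      simpa using (hasDerivAt_id θ).const_mul q
    have d := ((((hasDerivAt_sin θ).mul d1).mul dq.cos).const_mul (2 * (p + 2))).sub
      ((d2.mul dq.sin).const_mul q)
    refine d.congr_deriv ?_
    have e1 : (2 * cos θ) ^ (p + 1) = (2 * cos θ) ^ p * (2 * cos θ) := by
      rw [rpow_add hc, rpow_one]
    have e2 : (2 * cos θ) ^ (p + 2) = (2 * cos θ) ^ p * (2 * cos θ) ^ 2 := by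
      rw [rpow_add hc, rpow_two]
    rw [show p + 1 - 1 = p by ring, show p + 2 - 1 = p + 1 by ring, e1, e2]
    simp only [Pi.mul_apply, e1]
    have hs : sin θ ^ 2 = 1 - cos θ ^ 2 := by rw [← sin_sq_add_cos_sq θ]; ring
    generalize (2 * cos θ) ^ p = u
    linear_combination (-4 * (p + 2) * (p + 1) * u * cos (q * θ)) * hs
  · exact ((intervalIntegrable_cosIntegrand (by linarith) q).const_mul _).sub
      ((intervalIntegrable_cosIntegrand hp q).const_mul _)

theorem cosIntegral_mul_Gamma_shift {p q a b : ℝ} (hp : -1 < p) (ha : a = 1 + (p + q) / 2)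
    (hb : b = 1 + (p - q) / 2) (ha' : ∀ m : ℕ, a ≠ -m) (hb' : ∀ m : ℕ, b ≠ -m) (n : ℕ) :
    cosIntegral (p + 2 * n) q * (Gamma (n + a) * Gamma (n + b)) / Gamma (2 * n + (1 + p)) =
      cosIntegral p q * (Gamma a * Gamma b) / Gamma (1 + p) := by
  induction n with
  | zero => simp
  | succ n ih =>
    rw [← ih]
    have hn : (0 : ℝ) ≤ n := n.cast_nonneg
    have r := cosIntegral_recursion (show -1 < p + 2 * n by linarith) q
    have na : (n : ℝ) + a ≠ 0 := fun h => ha' n (by linarith)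
    have nb : (n : ℝ) + b ≠ 0 := fun h => hb' n (by linarith)
    have ea : Gamma (((n + 1 : ℕ) : ℝ) + a) = (n + a) * Gamma (n + a) := by
      rw [← Gamma_add_one na]; push_cast; ring_nf
    have eb : Gamma (((n + 1 : ℕ) : ℝ) + b) = (n + b) * Gamma (n + b) := by
      rw [← Gamma_add_one nb]; push_cast; ring_nf
    have p1 : 0 < 2 * (n : ℝ) + (1 + p) := by linarith
    have p2 : 0 < 2 * (n : ℝ) + (1 + p) + 1 := by linarith
    have eg : Gamma (2 * ((n + 1 : ℕ) : ℝ) + (1 + p)) =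
        (2 * n + (1 + p) + 1) * ((2 * n + (1 + p)) * Gamma (2 * n + (1 + p))) := by
      rw [← Gamma_add_one p1.ne', ← Gamma_add_one p2.ne']; push_cast; ring_nf
    have hg := (Gamma_pos_of_pos p1).ne'
    rw [ea, eb, eg, show p + 2 * ((n + 1 : ℕ) : ℝ) = p + 2 * n + 2 by push_cast; ring]
    have r' : (n + a) * (n + b) * cosIntegral (p + 2 * n + 2) q =
        (2 * n + (1 + p) + 1) * (2 * n + (1 + p)) * cosIntegral (p + 2 * n) q := by
      rw [ha, hb]; linear_combination r / 4
    rw [div_eq_div_iff (by positivity) hg]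
    linear_combination Gamma (n + a) * Gamma (n + b) * Gamma (2 * n + (1 + p)) * r'

theorem cosIntegral_even (n : ℕ) :
    cosIntegral (2 * n) 0 = π / 2 * (Gamma (2 * n + 1) / (Gamma (n + 1) * Gamma (n + 1))) := by
  have h := cosIntegral_mul_Gamma_shift (p := 0) (q := 0) (a := 1) (b := 1) (by norm_num)
    (by norm_num) (by norm_num) (fun m => by have : (0 : ℝ) ≤ m := m.cast_nonneg; linarith)
    (fun m => by have : (0 : ℝ) ≤ m := m.cast_nonneg; linarith) n
  have h0 : cosIntegral 0 0 = π / 2 := by simp [cosIntegral]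
  rw [h0] at h
  simp only [zero_add, add_zero, Gamma_one, mul_one, div_one] at h
  have h1 := Gamma_pos_of_pos (show (0 : ℝ) < n + 1 by positivity)
  have h2 := Gamma_pos_of_pos (show (0 : ℝ) < 2 * n + 1 by positivity)
  rw [← h]
  field_simp

theorem tendsto_cosIntegral_div {p : ℝ} (hp : 0 < p) (q : ℝ) :
    Tendsto (fun n : ℕ => cosIntegral (p + 2 * n) q / cosIntegral (2 * n) 0) atTop
      (𝓝 (2 ^ p)) := by
  have hc : Continuous fun θ : ℝ => (2 * cos θ) ^ p :=
    (continuous_const.mul continuous_cos).rpow_const fun _ => Or.inr hp.le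
  have h := (EulerSine.tendsto_integral_cos_pow_mul_div
    (f := fun θ : ℝ => (((2 * cos θ) ^ p * cos (q * θ) : ℝ) : ℂ))
    (Continuous.continuousOn (by fun_prop))).comp
      (tendsto_id.const_mul_atTop' (show 0 < 2 by norm_num))
  have h' := (Complex.continuous_re.tendsto _).comp h
  simp only [cos_zero, mul_one, mul_zero, Complex.ofReal_re] at h'
  refine h'.congr fun n => ?_
  simp only [Function.comp_apply, id, ← Complex.ofReal_pow,
    ← Complex.ofReal_mul]
  rw [intervalIntegral.integral_ofReal, ← Complex.ofReal_div, Complex.ofReal_re]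
  have e1 : cosIntegral (p + 2 * n) q =
      4 ^ n * ∫ θ in (0 : ℝ)..π / 2, cos θ ^ (2 * n) * ((2 * cos θ) ^ p * cos (q * θ)) := by
    rw [cosIntegral, ← intervalIntegral.integral_const_mul]
    refine intervalIntegral.integral_congr fun θ hθ => ?_
    rw [Set.uIcc_of_le (by positivity)] at hθ
    have h0 : 0 ≤ 2 * cos θ := mul_nonneg two_pos.le
      (cos_nonneg_of_neg_pi_div_two_le_of_le (by linarith [hθ.1, pi_pos]) hθ.2)
    have : (2 * cos θ) ^ (p + 2 * n) = (2 * cos θ) ^ p * (2 * cos θ) ^ (2 * n) := by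
      rw [← rpow_natCast (2 * cos θ) (2 * n), ← rpow_add_of_nonneg h0 hp.le (by positivity)]
      push_cast; rfl
    simp only [this, mul_pow, pow_mul]
    norm_num
    ring
  have e2 : cosIntegral (2 * n) 0 = 4 ^ n * ∫ θ in (0 : ℝ)..π / 2, cos θ ^ (2 * n) := by
    rw [cosIntegral, ← intervalIntegral.integral_const_mul]
    refine intervalIntegral.integral_congr fun θ hθ => ?_
    have : (2 * cos θ) ^ (2 * n : ℝ) = (2 * cos θ) ^ (2 * n) := by
      rw [← rpow_natCast (2 * cos θ) (2 * n)]
      push_cast; rfl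
    simp only [this, mul_pow, pow_mul]
    norm_num
  rw [e1, e2, mul_div_mul_left _ _ (by positivity)]

/-- Cauchy's evaluation of `∫ (2 cos θ)^p cos (q θ)` over `[0, π/2]`. -/
theorem cosIntegral_mul_Gamma {p q a b : ℝ} (hp : -1 < p) (ha : a = 1 + (p + q) / 2)
    (hb : b = 1 + (p - q) / 2) (ha' : ∀ m : ℕ, a ≠ -m) (hb' : ∀ m : ℕ, b ≠ -m) :
    cosIntegral p q * (Gamma a * Gamma b) = π / 2 * Gamma (1 + p) := by
  have hg := (Gamma_pos_of_pos (show 0 < 1 + p by linarith)).ne'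
  rw [← div_eq_iff hg]
  have h1 := tendsto_cosIntegral_div (show 0 < p + 2 by linarith) q
  have h2 := tendsto_Gamma_ratio_mul_rpow (a + 1) (b + 1) 1 1
  have h3 := (tendsto_Gamma_ratio 1 (p + 3)).comp
    (tendsto_id.const_mul_atTop' (show 0 < 2 by norm_num))
  have h4 := ((h1.mul h2).mul h3).const_mul (π / 2 / 2 ^ (p + 2))
  have e2 : (2 : ℝ) ^ (p + 2) ≠ 0 := (rpow_pos_of_pos two_pos _).ne'
  rw [mul_one, mul_one, div_mul_cancel₀ _ e2] at h4
  refine tendsto_nhds_unique ((tendsto_const_nhds (x := cosIntegral p q * (Gamma a * Gamma b) /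
    Gamma (1 + p))).congr' ?_) h4
  filter_upwards [eventually_gt_atTop 0] with n hn
  have hn' : (0 : ℝ) < n := by exact_mod_cast hn
  rw [← cosIntegral_mul_Gamma_shift hp ha hb ha' hb' (n + 1), cosIntegral_even]
  have g1 := (Gamma_pos_of_pos (show (0 : ℝ) < n + 1 by positivity)).ne'
  have g2 := (Gamma_pos_of_pos (show (0 : ℝ) < 2 * n + 1 by positivity)).ne'
  have g3 := (Gamma_pos_of_pos (show (0 : ℝ) < 2 * n + (p + 3) by linarith)).ne'
  simp only [Function.comp_apply, id, Nat.cast_add, Nat.cast_one, Nat.cast_mul, Nat.cast_ofNat]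
  have r1 : (n : ℝ) ^ (1 + 1 - (a + 1) - (b + 1)) = ((n : ℝ) ^ (p + 2))⁻¹ := by
    rw [← rpow_neg hn'.le]; congr 1; rw [ha, hb]; ring
  have r2 : (2 * n : ℝ) ^ (p + 3 - 1) = 2 ^ (p + 2) * (n : ℝ) ^ (p + 2) := by
    rw [← mul_rpow two_pos.le hn'.le]; congr 1; ring
  have r3 : (n : ℝ) ^ (p + 2) ≠ 0 := (rpow_pos_of_pos hn' _).ne'
  have pp := pi_pos.ne'
  rw [r1, r2, show p + 2 * ((n : ℝ) + 1) = p + 2 + 2 * n by ring,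
    show (n : ℝ) + 1 + a = n + (a + 1) by ring, show (n : ℝ) + 1 + b = n + (b + 1) by ring,
    show 2 * ((n : ℝ) + 1) + (1 + p) = 2 * n + (p + 3) by ring]
  field_simp

theorem intervalIntegrable_two_cos_rpow_mul_exp {p a b : ℝ}
    (h : IntervalIntegrable (fun θ : ℝ => (2 * cos θ) ^ p) volume a b) (r : ℝ) :
    IntervalIntegrable (fun θ : ℝ => (((2 * cos θ) ^ p : ℝ) : ℂ) *
      Complex.exp ((r * θ : ℝ) * Complex.I)) volume a b :=
  IntervalIntegrable.mul_continuousOn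
    (⟨h.1.ofReal, h.2.ofReal⟩ : IntervalIntegrable (fun θ => (((2 * cos θ) ^ p : ℝ) : ℂ)) volume a b)
    (by fun_prop)

theorem integral_two_cos_rpow_mul_exp {p : ℝ} (hp : -1 < p) (r : ℝ) :
    ∫ θ in (-(π / 2))..π / 2, (((2 * cos θ) ^ p : ℝ) : ℂ) * Complex.exp ((r * θ : ℝ) * Complex.I) =
      ((2 * cosIntegral p r : ℝ) : ℂ) := by
  have hi : ∀ r : ℝ, IntervalIntegrable (fun θ : ℝ => (((2 * cos θ) ^ p : ℝ) : ℂ) *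
      Complex.exp ((r * θ : ℝ) * Complex.I)) volume 0 (π / 2) := fun r =>
    intervalIntegrable_two_cos_rpow_mul_exp (intervalIntegrable_two_cos_rpow_half hp) r
  have hi' : IntervalIntegrable (fun θ : ℝ => (((2 * cos θ) ^ p : ℝ) : ℂ) *
      Complex.exp ((r * θ : ℝ) * Complex.I)) volume (-(π / 2)) 0 :=
    intervalIntegrable_two_cos_rpow_mul_exp (intervalIntegrable_two_cos_rpow_half_neg hp) r
  rw [← intervalIntegral.integral_add_adjacent_intervals hi' (hi r)]
  have e : ∫ θ in (-(π / 2))..0, (((2 * cos θ) ^ p : ℝ) : ℂ) *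
      Complex.exp ((r * θ : ℝ) * Complex.I) = ∫ θ in (0 : ℝ)..π / 2, (((2 * cos θ) ^ p : ℝ) : ℂ) *
      Complex.exp (((-r) * θ : ℝ) * Complex.I) := by
    have := intervalIntegral.integral_comp_neg (a := 0) (b := π / 2)
      (fun θ : ℝ => (((2 * cos θ) ^ p : ℝ) : ℂ) * Complex.exp ((r * θ : ℝ) * Complex.I))
    rw [neg_zero] at this
    rw [← this]
    simp
  rw [e, ← intervalIntegral.integral_add (hi _) (hi _), cosIntegral,
    ← intervalIntegral.integral_const_mul, ← intervalIntegral.integral_ofReal]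
  refine intervalIntegral.integral_congr fun θ _ => ?_
  simp only [← mul_add]
  push_cast
  rw [mul_left_comm, Complex.two_cos]
  ring_nf

theorem integral_two_cos_rpow_mul_cos {p : ℝ} (hp : -1 < p) (r : ℝ) :
    ∫ θ in (-(π / 2))..π / 2, (2 * cos θ) ^ p * cos (r * θ) = 2 * cosIntegral p r := by
  have h := congrArg Complex.re (integral_two_cos_rpow_mul_exp hp r)
  have hi : IntervalIntegrable (fun θ : ℝ => (((2 * cos θ) ^ p : ℝ) : ℂ) *
      Complex.exp ((r * θ : ℝ) * Complex.I)) volume (-(π / 2)) (π / 2) :=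
    intervalIntegrable_two_cos_rpow_mul_exp (intervalIntegrable_two_cos_rpow hp) r
  rw [Complex.ofReal_re] at h
  rw [← h, ← Complex.reCLM_apply, ← ContinuousLinearMap.intervalIntegral_comp_comm _ hi]
  refine intervalIntegral.integral_congr fun θ _ => ?_
  simp only [Complex.reCLM_apply, Complex.re_ofReal_mul, Complex.exp_ofReal_mul_I_re]

/-- A combination of two modulated powers of the cosine. -/
noncomputable def cosWave (p q r ε θ : ℝ) : ℂ :=
  (((2 * cos θ) ^ p : ℝ) : ℂ) * Complex.exp ((q * θ : ℝ) * Complex.I) +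
    ε * ((((2 * cos θ) ^ p : ℝ) : ℂ) * Complex.exp ((r * θ : ℝ) * Complex.I))

theorem norm_cosWave_sq {p q r ε θ : ℝ} (h : 0 ≤ cos θ) : ‖cosWave p q r ε θ‖ ^ 2 =
    (1 + ε ^ 2) * (2 * cos θ) ^ (2 * p) + 2 * ε * ((2 * cos θ) ^ (2 * p) * cos ((q - r) * θ)) := by
  have e : (2 * cos θ) ^ (2 * p) = ((2 * cos θ) ^ p) ^ 2 := by
    rw [← rpow_natCast, ← rpow_mul (by positivity), mul_comm p, Nat.cast_ofNat]
  rw [e, Complex.sq_norm, cosWave, Complex.normSq_apply]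
  simp only [Complex.add_re, Complex.add_im, Complex.re_ofReal_mul, Complex.im_ofReal_mul,
    Complex.exp_ofReal_mul_I_re, Complex.exp_ofReal_mul_I_im]
  rw [sub_mul, cos_sub]
  generalize (2 * cos θ) ^ p = u
  linear_combination u ^ 2 * sin_sq_add_cos_sq (q * θ) + u ^ 2 * ε ^ 2 * sin_sq_add_cos_sq (r * θ)

theorem neg_pi_div_two_lt_pi_div_two : -(π / 2) < π / 2 := by linarith [pi_pos]

theorem cos_nonneg_of_mem_Ioc {θ : ℝ} (h : θ ∈ Set.Ioc (-(π / 2)) (π / 2)) : 0 ≤ cos θ :=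
  cos_nonneg_of_neg_pi_div_two_le_of_le h.1.le h.2

theorem memLp_cosWave {p : ℝ} (hp : -1 / 2 < p) (q r ε : ℝ) :
    MemLp (cosWave p q r ε) 2 (volume.restrict (Set.Ioc (-(π / 2)) (π / 2))) := by
  have hm : Measurable (cosWave p q r ε) := by unfold cosWave; fun_prop
  rw [memLp_two_iff_integrable_sq_norm hm.aestronglyMeasurable]
  have h1 := intervalIntegrable_two_cos_rpow (show -1 < 2 * p by linarith)
  have h2 : IntervalIntegrable (fun θ : ℝ => (2 * cos θ) ^ (2 * p) * cos ((q - r) * θ)) volume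
    (-(π / 2)) (π / 2) := h1.mul_continuousOn (by fun_prop)
  have h3 := (h1.const_mul (1 + ε ^ 2)).add (h2.const_mul (2 * ε))
  rw [intervalIntegrable_iff_integrableOn_Ioc_of_le neg_pi_div_two_lt_pi_div_two.le] at h3
  refine h3.congr_fun (fun θ hθ => ?_) measurableSet_Ioc
  exact (norm_cosWave_sq (cos_nonneg_of_mem_Ioc hθ)).symm

theorem integral_norm_cosWave_sq {p : ℝ} (hp : -1 / 2 < p) (q r ε : ℝ) :
    ∫ θ in (-(π / 2))..π / 2, ‖cosWave p q r ε θ‖ ^ 2 =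
      (1 + ε ^ 2) * (∫ θ in (-(π / 2))..π / 2, (2 * cos θ) ^ (2 * p)) +
        4 * ε * cosIntegral (2 * p) (q - r) := by
  have h1 := intervalIntegrable_two_cos_rpow (show -1 < 2 * p by linarith)
  have h2 : IntervalIntegrable (fun θ : ℝ => (2 * cos θ) ^ (2 * p) * cos ((q - r) * θ)) volume
    (-(π / 2)) (π / 2) := h1.mul_continuousOn (by fun_prop)
  have e : ∫ θ in (-(π / 2))..π / 2, ‖cosWave p q r ε θ‖ ^ 2 = ∫ θ in (-(π / 2))..π / 2,
      ((1 + ε ^ 2) * (2 * cos θ) ^ (2 * p) +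
        2 * ε * ((2 * cos θ) ^ (2 * p) * cos ((q - r) * θ))) := by
    rw [intervalIntegral.integral_of_le neg_pi_div_two_lt_pi_div_two.le,
      intervalIntegral.integral_of_le neg_pi_div_two_lt_pi_div_two.le]
    exact setIntegral_congr_fun measurableSet_Ioc fun θ hθ =>
      norm_cosWave_sq (cos_nonneg_of_mem_Ioc hθ)
  rw [e, intervalIntegral.integral_add (h1.const_mul _) (h2.const_mul _),
    intervalIntegral.integral_const_mul, intervalIntegral.integral_const_mul,
    integral_two_cos_rpow_mul_cos (by linarith)]
  ring

theorem fourierCoeffOn_cosWave {p : ℝ} (hp : -1 < p) (q r ε : ℝ) (k : ℤ) :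
    fourierCoeffOn neg_pi_div_two_lt_pi_div_two (cosWave p q r ε) k =
      ((2 / π * (cosIntegral p (q - 2 * k) + ε * cosIntegral p (r - 2 * k)) : ℝ) : ℂ) := by
  have hi : ∀ r : ℝ, IntervalIntegrable (fun θ : ℝ => (((2 * cos θ) ^ p : ℝ) : ℂ) *
      Complex.exp ((r * θ : ℝ) * Complex.I)) volume (-(π / 2)) (π / 2) := fun r =>
    intervalIntegrable_two_cos_rpow_mul_exp (intervalIntegrable_two_cos_rpow hp) r
  have hpi : (π : ℂ) ≠ 0 := by exact_mod_cast pi_pos.ne'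
  rw [fourierCoeffOn_eq_integral]
  have e : ∀ θ : ℝ, fourier (-k) (θ : AddCircle (π / 2 - -(π / 2))) • cosWave p q r ε θ =
      (((2 * cos θ) ^ p : ℝ) : ℂ) * Complex.exp (((q - 2 * k) * θ : ℝ) * Complex.I) +
      ε * ((((2 * cos θ) ^ p : ℝ) : ℂ) * Complex.exp (((r - 2 * k) * θ : ℝ) * Complex.I)) := by
    intro θ
    have h1 : ∀ s : ℝ, Complex.exp (((s - 2 * k) * θ : ℝ) * Complex.I) =
        fourier (-k) (θ : AddCircle (π / 2 - -(π / 2))) * Complex.exp ((s * θ : ℝ) * Complex.I) := by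
      intro s
      rw [fourier_coe_apply, ← Complex.exp_add]
      congr 1
      push_cast
      field_simp
      ring
    rw [h1, h1, cosWave, smul_eq_mul]
    ring
  simp only [e]
  rw [intervalIntegral.integral_add (hi _) ((hi _).const_mul _),
    intervalIntegral.integral_const_mul, integral_two_cos_rpow_mul_exp hp,
    integral_two_cos_rpow_mul_exp hp, show 1 / (π / 2 - -(π / 2)) = 1 / π by ring, Complex.real_smul]
  push_cast
  ring

theorem hasSum_cosIntegral_mul {p : ℝ} (hp : -1 / 2 < p) (q r : ℝ) :
    HasSum (fun k : ℤ => cosIntegral p (q - 2 * k) * cosIntegral p (r - 2 * k))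
      (π / 2 * cosIntegral (2 * p) (q - r)) := by
  have h1 := hasSum_sq_fourierCoeffOn neg_pi_div_two_lt_pi_div_two (memLp_cosWave hp q r 1)
  have h2 := hasSum_sq_fourierCoeffOn neg_pi_div_two_lt_pi_div_two (memLp_cosWave hp q r (-1))
  have h := (h1.sub h2).mul_left (π ^ 2 / 16)
  simp only [fourierCoeffOn_cosWave (show -1 < p by linarith), Complex.norm_real, norm_eq_abs, sq_abs,
    integral_norm_cosWave_sq hp, smul_eq_mul] at h
  have hpi := pi_pos.ne'
  have e : ∀ u v : ℝ,
      π ^ 2 / 16 * ((2 / π * (u + 1 * v)) ^ 2 - (2 / π * (u + -1 * v)) ^ 2) = u * v := fun u v => by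
    field_simp
    ring
  have e' : ∀ u v : ℝ, π ^ 2 / 16 * (π⁻¹ * ((1 + 1 ^ 2) * u + 4 * 1 * v) -
      π⁻¹ * ((1 + (-1) ^ 2) * u + 4 * -1 * v)) = π / 2 * v := fun u v => by
    field_simp
    ring
  simpa only [e, show π / 2 - -(π / 2) = π by ring, e'] using h

/-- Terms of the reflected auxiliary series. -/
noncomputable def dualTerm (x : ℝ) (j : ℕ) : ℝ :=
  Gamma (j + (1 - 2 * x)) * Gamma (j + (1 - x)) / (Gamma (j + 3 / 2) * Gamma (j + (3 / 2 - x)))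

theorem summable_dualTerm {x : ℝ} (hx : 0 < x) : Summable (dualTerm x) :=
  summable_Gamma_ratio (by linarith)

theorem ne_neg_natCast_of_lt {a : ℝ} {m : ℤ} (h1 : m < a) (h2 : a < m + 1) (n : ℕ) :
    a ≠ -(n : ℝ) := by
  intro h
  rw [h] at h1 h2
  have h1' : m < -(n : ℤ) := by exact_mod_cast h1
  have h2' : -(n : ℤ) < m + 1 := by exact_mod_cast h2
  omega

theorem inv_Gamma_eq (s : ℝ) (hs : ∀ m : ℕ, 1 - s ≠ -m) :
    (Gamma s)⁻¹ = Gamma (1 - s) * sin (π * s) / π := by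
  have h := Gamma_mul_Gamma_one_sub s
  have hg : Gamma (1 - s) ≠ 0 := Gamma_ne_zero hs
  by_cases h0 : sin (π * s) = 0
  · rw [h0, div_zero] at h
    rw [h0, (mul_eq_zero.1 h).resolve_right hg]; simp
  · have hp := pi_pos.ne'
    have h1 : Gamma s ≠ 0 := by
      intro h2; rw [h2, zero_mul] at h; exact div_ne_zero hp h0 h.symm
    rw [eq_div_iff h0] at h
    rw [eq_div_iff hp, inv_mul_eq_iff_eq_mul₀ h1]
    linear_combination -h

theorem cosIntegral_mul_nat {x : ℝ} (hx : 0 < x) (hx' : x < 1 / 8) (k : ℕ) :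
    cosIntegral (-1 / 2 + x) (-1 / 2 - x - 2 * (k : ℤ)) *
      cosIntegral (-1 / 2 + x) (-1 / 2 - 3 * x - 2 * (k : ℤ)) =
      Gamma (1 / 2 + x) ^ 2 * cos (π * x) / 4 * auxTerm x k := by
  have hk : (0 : ℝ) ≤ k := k.cast_nonneg
  have n1 : ∀ m : ℕ, (1 / 2 - k : ℝ) ≠ -m :=
    ne_neg_natCast_of_lt (m := -k) (by push_cast; linarith) (by push_cast; linarith)
  have n2 : ∀ m : ℕ, (k + (1 + x) : ℝ) ≠ -m :=
    ne_neg_natCast_of_lt (m := k + 1) (by push_cast; linarith) (by push_cast; linarith)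
  have n3 : ∀ m : ℕ, (1 / 2 - x - k : ℝ) ≠ -m :=
    ne_neg_natCast_of_lt (m := -k) (by push_cast; linarith) (by push_cast; linarith)
  have n4 : ∀ m : ℕ, (k + (1 + 2 * x) : ℝ) ≠ -m :=
    ne_neg_natCast_of_lt (m := k + 1) (by push_cast; linarith) (by push_cast; linarith)
  have n5 : ∀ m : ℕ, (1 - (1 / 2 - k) : ℝ) ≠ -m :=
    ne_neg_natCast_of_lt (m := k) (by push_cast; linarith) (by push_cast; linarith)
  have n6 : ∀ m : ℕ, (1 - (1 / 2 - x - k) : ℝ) ≠ -m :=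
    ne_neg_natCast_of_lt (m := k) (by push_cast; linarith) (by push_cast; linarith)
  have c1 := cosIntegral_mul_Gamma (p := -1 / 2 + x) (q := -1 / 2 - x - 2 * (k : ℤ))
    (by linarith) (by push_cast; ring) (by push_cast; ring) n1 n2
  have c2 := cosIntegral_mul_Gamma (p := -1 / 2 + x) (q := -1 / 2 - 3 * x - 2 * (k : ℤ))
    (by linarith) (by push_cast; ring) (by push_cast; ring) n3 n4
  rw [← eq_div_iff (mul_ne_zero (Gamma_ne_zero n1) (Gamma_ne_zero n2)), div_eq_mul_inv (π / 2 * _), mul_inv,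
    inv_Gamma_eq _ n5] at c1
  rw [← eq_div_iff (mul_ne_zero (Gamma_ne_zero n3) (Gamma_ne_zero n4)), div_eq_mul_inv (π / 2 * _), mul_inv,
    inv_Gamma_eq _ n6] at c2
  have s1 : sin (π * (1 / 2 - k)) = (-1) ^ k := by
    rw [show π * (1 / 2 - k) = π / 2 - k * π by ring, sin_pi_div_two_sub, cos_nat_mul_pi]
  have s2 : sin (π * (1 / 2 - x - k)) = (-1) ^ k * cos (π * x) := by
    rw [show π * (1 / 2 - x - k) = π / 2 - (π * x + k * π) by ring, sin_pi_div_two_sub,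
      cos_add_nat_mul_pi]
  rw [c1, c2, s1, s2, auxTerm, show (1 : ℝ) - (1 / 2 - k) = k + 1 / 2 by ring,
    show (1 : ℝ) - (1 / 2 - x - k) = k + (1 / 2 + x) by ring,
    show 1 + (-1 / 2 + x) = 1 / 2 + x by ring]
  have hs : ((-1 : ℝ) ^ k) * (-1) ^ k = 1 := by rw [← mul_pow]; norm_num
  have hp := pi_pos.ne'
  generalize ((-1 : ℝ) ^ k) = e at hs ⊢
  generalize Gamma (1 / 2 + x) = g
  generalize Gamma (k + 1 / 2) = a, Gamma (k + (1 / 2 + x)) = b, Gamma (k + (1 + x)) = c,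
    Gamma (k + (1 + 2 * x)) = d
  generalize cos (π * x) = y
  have h2 : π * π⁻¹ = 1 := mul_inv_cancel₀ hp
  simp only [div_eq_mul_inv, mul_inv]
  linear_combination (a * b * c⁻¹ * d⁻¹ * g ^ 2 * y / 4) * ((π * π⁻¹) ^ 2 * hs + (π * π⁻¹ + 1) * h2)

theorem cosIntegral_mul_neg {x : ℝ} (hx : 0 < x) (hx' : x < 1 / 8) (k : ℕ) :
    cosIntegral (-1 / 2 + x) (-1 / 2 - x - 2 * (-((k : ℤ) + 1) : ℤ)) *
      cosIntegral (-1 / 2 + x) (-1 / 2 - 3 * x - 2 * (-((k : ℤ) + 1) : ℤ)) =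
      Gamma (1 / 2 + x) ^ 2 * cos (π * x) / 4 * (2 * sin (π * x) ^ 2 * dualTerm x k) := by
  have hk : (0 : ℝ) ≤ k := k.cast_nonneg
  have n1 : ∀ m : ℕ, (k + 3 / 2 : ℝ) ≠ -m :=
    ne_neg_natCast_of_lt (m := k + 1) (by push_cast; linarith) (by push_cast; linarith)
  have n2 : ∀ m : ℕ, (x - k : ℝ) ≠ -m :=
    ne_neg_natCast_of_lt (m := -k) (by push_cast; linarith) (by push_cast; linarith)
  have n3 : ∀ m : ℕ, (k + (3 / 2 - x) : ℝ) ≠ -m :=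
    ne_neg_natCast_of_lt (m := k + 1) (by push_cast; linarith) (by push_cast; linarith)
  have n4 : ∀ m : ℕ, (2 * x - k : ℝ) ≠ -m :=
    ne_neg_natCast_of_lt (m := -k) (by push_cast; linarith) (by push_cast; linarith)
  have n5 : ∀ m : ℕ, (1 - (x - k) : ℝ) ≠ -m :=
    ne_neg_natCast_of_lt (m := k) (by push_cast; linarith) (by push_cast; linarith)
  have n6 : ∀ m : ℕ, (1 - (2 * x - k) : ℝ) ≠ -m :=
    ne_neg_natCast_of_lt (m := k) (by push_cast; linarith) (by push_cast; linarith)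
  have c1 := cosIntegral_mul_Gamma (p := -1 / 2 + x) (q := -1 / 2 - x - 2 * (-((k : ℤ) + 1) : ℤ))
    (by linarith) (by push_cast; ring) (by push_cast; ring) n1 n2
  have c2 := cosIntegral_mul_Gamma (p := -1 / 2 + x)
    (q := -1 / 2 - 3 * x - 2 * (-((k : ℤ) + 1) : ℤ))
    (by linarith) (by push_cast; ring) (by push_cast; ring) n3 n4
  rw [← eq_div_iff (mul_ne_zero (Gamma_ne_zero n1) (Gamma_ne_zero n2)), div_eq_mul_inv (π / 2 * _), mul_inv,
    inv_Gamma_eq _ n5] at c1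
  rw [← eq_div_iff (mul_ne_zero (Gamma_ne_zero n3) (Gamma_ne_zero n4)), div_eq_mul_inv (π / 2 * _), mul_inv,
    inv_Gamma_eq _ n6] at c2
  have s1 : sin (π * (x - k)) = (-1) ^ k * sin (π * x) := by
    rw [show π * (x - k) = π * x - k * π by ring, sin_sub_nat_mul_pi]
  have s2 : sin (π * (2 * x - k)) = (-1) ^ k * (2 * sin (π * x) * cos (π * x)) := by
    rw [show π * (2 * x - k) = 2 * (π * x) - k * π by ring, sin_sub_nat_mul_pi, sin_two_mul]
  rw [c1, c2, s1, s2, dualTerm, show (1 : ℝ) - (x - k) = k + (1 - x) by ring,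
    show (1 : ℝ) - (2 * x - k) = k + (1 - 2 * x) by ring,
    show 1 + (-1 / 2 + x) = 1 / 2 + x by ring]
  have hs : ((-1 : ℝ) ^ k) * (-1) ^ k = 1 := by rw [← mul_pow]; norm_num
  have hp := pi_pos.ne'
  generalize ((-1 : ℝ) ^ k) = e at hs ⊢
  generalize Gamma (1 / 2 + x) = g
  generalize Gamma (k + (1 - x)) = a, Gamma (k + (1 - 2 * x)) = b, Gamma (k + 3 / 2) = c,
    Gamma (k + (3 / 2 - x)) = d
  generalize cos (π * x) = y
  generalize sin (π * x) = z
  have h2 : π * π⁻¹ = 1 := mul_inv_cancel₀ hp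
  simp only [div_eq_mul_inv, mul_inv]
  linear_combination (a * b * c⁻¹ * d⁻¹ * g ^ 2 * y * z ^ 2 / 2) *
    ((π * π⁻¹) ^ 2 * hs + (π * π⁻¹ + 1) * h2)

/-- The bilateral sum of the auxiliary terms. -/
theorem bilateral_sum {x : ℝ} (hx : 0 < x) (hx' : x < 1 / 8) :
    auxFactor x * (∑' k, auxTerm x k + 2 * sin (π * x) ^ 2 * ∑' k, dualTerm x k) * cos (π * x) =
      π * √π := by
  have h1 := ((summable_auxTerm hx).hasSum.mul_left (Gamma (1 / 2 + x) ^ 2 * cos (π * x) / 4))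
  have h2 := (((summable_dualTerm hx).hasSum.mul_left (2 * sin (π * x) ^ 2)).mul_left
    (Gamma (1 / 2 + x) ^ 2 * cos (π * x) / 4))
  simp only [← cosIntegral_mul_nat hx hx'] at h1
  simp only [← cosIntegral_mul_neg hx hx'] at h2
  have h3 := HasSum.of_nat_of_neg_add_one (f := fun k : ℤ =>
    cosIntegral (-1 / 2 + x) (-1 / 2 - x - 2 * k) *
      cosIntegral (-1 / 2 + x) (-1 / 2 - 3 * x - 2 * k)) h1 h2
  have h4 := h3.unique (hasSum_cosIntegral_mul (show -1 / 2 < -1 / 2 + x by linarith)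
    (-1 / 2 - x) (-1 / 2 - 3 * x))
  have n1 : ∀ m : ℕ, (1 / 2 + 2 * x : ℝ) ≠ -m :=
    ne_neg_natCast_of_lt (m := 0) (by push_cast; linarith) (by push_cast; linarith)
  have n2 : ∀ m : ℕ, (1 / 2 : ℝ) ≠ -m :=
    ne_neg_natCast_of_lt (m := 0) (by push_cast; linarith) (by push_cast; linarith)
  have c := cosIntegral_mul_Gamma (p := 2 * (-1 / 2 + x)) (q := -1 / 2 - x - (-1 / 2 - 3 * x))
    (by linarith) (by ring) (by ring) n1 n2
  rw [Gamma_one_half_eq, show 1 + 2 * (-1 / 2 + x) = 2 * x by ring] at c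
  have hg := (Gamma_pos_of_pos (show 0 < 2 * x by linarith)).ne'
  have p8 : 0 < √π := sqrt_pos.2 pi_pos
  have p9 : √π ^ 2 = π := sq_sqrt pi_pos.le
  have h5 := congrArg (fun t => t * (4 * Gamma (1 / 2 + 2 * x) * √π)) h4
  have h6 : Gamma (1 / 2 + 2 * x) * Gamma (1 / 2 + x) ^ 2 *
      (∑' k, auxTerm x k + 2 * sin (π * x) ^ 2 * ∑' k, dualTerm x k) * cos (π * x) * √π =
        π * √π * Gamma (2 * x) * √π := by
    linear_combination h5 + 2 * π * c - π * Gamma (2 * x) * p9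
  have := mul_right_cancel₀ p8.ne' h6
  rw [auxFactor, div_mul_eq_mul_div, div_mul_eq_mul_div, div_eq_iff hg]
  exact this

theorem Gamma_mul_ratio_succ {a b c d : ℝ} (ha : 0 < a) (hb : 0 < b) (hc : 0 < c) (hd : 0 < d)
    (n : ℕ) :
    Gamma ((n + 1 : ℕ) + a) * Gamma ((n + 1 : ℕ) + b) /
      (Gamma ((n + 1 : ℕ) + c) * Gamma ((n + 1 : ℕ) + d)) =
    Gamma (n + a) * Gamma (n + b) / (Gamma (n + c) * Gamma (n + d)) *
      ((n + a) * (n + b) / ((n + c) * (n + d))) := by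
  have hn : (0 : ℝ) ≤ n := n.cast_nonneg
  have e : ∀ t : ℝ, 0 < t → Gamma ((n + 1 : ℕ) + t) = (n + t) * Gamma (n + t) := fun t ht => by
    rw [← Gamma_add_one (by positivity)]; congr 1; push_cast; ring
  rw [e a ha, e b hb, e c hc, e d hd, div_mul_div_comm]
  congr 1 <;> ring

theorem Gamma_mul_Gamma_le {a b c d : ℝ} (ha : 0 < a) (hb : 0 < b) (hc : 0 < c) (hd : 0 < d)
    (h : a + b = c + d) (h' : a * b ≤ c * d) (n : ℕ) :
    Gamma (n + c) * Gamma (n + d) ≤ Gamma (n + a) * Gamma (n + b) := by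
  have hpos : ∀ (t : ℝ), 0 < t → ∀ m : ℕ, 0 < Gamma (m + t) := fun t ht m =>
    Gamma_pos_of_pos (by positivity)
  have hanti : Antitone (fun m : ℕ =>
      Gamma (m + a) * Gamma (m + b) / (Gamma (m + c) * Gamma (m + d))) := by
    refine antitone_nat_of_succ_le fun m => ?_
    rw [Gamma_mul_ratio_succ ha hb hc hd]
    have hm : (0 : ℝ) ≤ m := m.cast_nonneg
    refine mul_le_of_le_one_right ?_ ?_
    · have := hpos a ha m; have := hpos b hb m; have := hpos c hc m; have := hpos d hd m
      positivity
    · rw [div_le_one (by positivity)]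
      have := congrArg (fun t : ℝ => (m : ℝ) * t) h
      nlinarith
  have := hanti.le_of_tendsto (tendsto_Gamma_ratio_mul h) n
  rwa [le_div_iff₀ (mul_pos (hpos c hc n) (hpos d hd n)), one_mul] at this

theorem dualTerm_le_auxTerm {x : ℝ} (hx : 0 ≤ x) (hx' : x < 1 / 8) (j : ℕ) :
    dualTerm x j ≤ auxTerm x j := by
  have hj : (0 : ℝ) ≤ j := j.cast_nonneg
  have h1 := Gamma_mul_Gamma_le (a := 1 / 2) (b := 3 / 2) (c := 1 + 2 * x) (d := 1 - 2 * x)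
    (by linarith) (by linarith) (by linarith) (by linarith) (by ring) (by nlinarith) j
  have h2 := Gamma_mul_Gamma_le (a := 1 / 2 + x) (b := 3 / 2 - x) (c := 1 + x) (d := 1 - x)
    (by linarith) (by linarith) (by linarith) (by linarith) (by ring) (by nlinarith) j
  have p1 := Gamma_pos_of_pos (show (0 : ℝ) < j + (1 + 2 * x) by linarith)
  have p2 := Gamma_pos_of_pos (show (0 : ℝ) < j + (1 + x) by linarith)
  have p3 := Gamma_pos_of_pos (show (0 : ℝ) < j + 3 / 2 by linarith)
  have p4 := Gamma_pos_of_pos (show (0 : ℝ) < j + (3 / 2 - x) by linarith)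
  have p5 := Gamma_pos_of_pos (show (0 : ℝ) < j + (1 - x) by linarith)
  have p6 := Gamma_pos_of_pos (show (0 : ℝ) < j + 1 / 2 by linarith)
  rw [dualTerm, auxTerm, div_le_div_iff₀ (by positivity) (by positivity)]
  have := mul_le_mul h1 h2 (by positivity) (by positivity)
  linarith

theorem auxTerm_succ_le_dualTerm {x : ℝ} (hx : 0 ≤ x) (hx' : x < 1 / 8) (j : ℕ) :
    auxTerm x (j + 1) ≤ dualTerm x j := by
  have hj : (0 : ℝ) ≤ j := j.cast_nonneg
  have h1 := Gamma_mul_Gamma_le (a := 2 + 2 * x) (b := 1 - 2 * x) (c := 3 / 2) (d := 3 / 2)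
    (by linarith) (by linarith) (by linarith) (by linarith) (by ring) (by nlinarith) j
  have h2 := Gamma_mul_Gamma_le (a := 2 + x) (b := 1 - x) (c := 3 / 2 + x) (d := 3 / 2 - x)
    (by linarith) (by linarith) (by linarith) (by linarith) (by ring) (by nlinarith) j
  have p1 := Gamma_pos_of_pos (show (0 : ℝ) < j + (2 + 2 * x) by linarith)
  have p2 := Gamma_pos_of_pos (show (0 : ℝ) < j + (2 + x) by linarith)
  have p3 := Gamma_pos_of_pos (show (0 : ℝ) < j + 3 / 2 by linarith)
  have p4 := Gamma_pos_of_pos (show (0 : ℝ) < j + (3 / 2 - x) by linarith)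
  have p5 := Gamma_pos_of_pos (show (0 : ℝ) < j + (3 / 2 + x) by linarith)
  have p6 := Gamma_pos_of_pos (show (0 : ℝ) < j + (1 - 2 * x) by linarith)
  rw [dualTerm, auxTerm]
  push_cast
  rw [show (j : ℝ) + 1 + 1 / 2 = j + 3 / 2 by ring,
    show (j : ℝ) + 1 + (1 / 2 + x) = j + (3 / 2 + x) by ring,
    show (j : ℝ) + 1 + (1 + 2 * x) = j + (2 + 2 * x) by ring,
    show (j : ℝ) + 1 + (1 + x) = j + (2 + x) by ring,
    div_le_div_iff₀ (by positivity) (by positivity)]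
  have := mul_le_mul h1 h2 (by positivity) (by positivity)
  linarith

theorem sum_aux_sub_dual_le {x : ℝ} (hx : 0 ≤ x) (hx' : x < 1 / 8) (N n : ℕ) :
    ∑ j ∈ Finset.range n, (auxTerm x j - dualTerm x j) ≤
      ∑ j ∈ Finset.range N, (auxTerm x j - dualTerm x j) + auxTerm x N := by
  have hmono : Monotone fun n => ∑ j ∈ Finset.range n, (auxTerm x j - dualTerm x j) :=
    monotone_nat_of_le_succ fun n => by
      rw [Finset.sum_range_succ]; linarith [dualTerm_le_auxTerm hx hx' n]
  have hanti : Antitone fun n => ∑ j ∈ Finset.range n, (auxTerm x j - dualTerm x j) +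
      auxTerm x n :=
    antitone_nat_of_succ_le fun n => by
      rw [Finset.sum_range_succ]; linarith [auxTerm_succ_le_dualTerm hx hx' n]
  have h1 : ∑ j ∈ Finset.range n, (auxTerm x j - dualTerm x j) ≤ _ := hmono (le_max_left n N)
  have h2 : _ ≤ ∑ j ∈ Finset.range N, (auxTerm x j - dualTerm x j) + auxTerm x N :=
    hanti (le_max_right n N)
  have := auxTerm_pos hx (max n N)
  simp only at h1 h2
  linarith

theorem summable_aux_sub_dual {x : ℝ} (hx : 0 ≤ x) (hx' : x < 1 / 8) :
    Summable fun j => auxTerm x j - dualTerm x j :=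
  summable_of_sum_range_le (fun j => sub_nonneg.2 (dualTerm_le_auxTerm hx hx' j))
    (sum_aux_sub_dual_le hx hx' 0)

theorem abs_tsum_aux_sub_dual_sub_le {x : ℝ} (hx : 0 ≤ x) (hx' : x < 1 / 8) (N : ℕ) :
    |∑' j, (auxTerm x j - dualTerm x j) - ∑ j ∈ Finset.range N, (auxTerm x j - dualTerm x j)| ≤
      auxTerm x N := by
  have h0 : ∀ j, 0 ≤ auxTerm x j - dualTerm x j := fun j =>
    sub_nonneg.2 (dualTerm_le_auxTerm hx hx' j)
  have h1 := (summable_aux_sub_dual hx hx').sum_le_tsum (Finset.range N) fun j _ => h0 j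
  have h2 := Real.tsum_le_of_sum_range_le h0 (sum_aux_sub_dual_le hx hx' N)
  rw [abs_of_nonneg (by linarith)]
  linarith

theorem continuousAt_auxTerm (j : ℕ) : ContinuousAt (fun x => auxTerm x j) 0 := by
  have hj : (0 : ℝ) ≤ j := j.cast_nonneg
  have hG : ∀ t : ℝ, 0 < t → ContinuousAt Gamma t := fun t ht =>
    (differentiableAt_Gamma fun m => by have : (0 : ℝ) ≤ m := m.cast_nonneg; linarith).continuousAt
  have e : ∀ a b : ℝ, 0 < a → ContinuousAt (fun x : ℝ => Gamma (j + (a + b * x))) 0 :=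
    fun a b ha => ContinuousAt.comp (g := Gamma) (hG _ (by simp; linarith)) (by fun_prop)
  unfold auxTerm
  refine ContinuousAt.div (continuousAt_const.mul ?_) (ContinuousAt.mul ?_ ?_) ?_
  · simpa using e (1 / 2) 1 (by norm_num)
  · exact e 1 2 (by norm_num)
  · simpa using e 1 1 (by norm_num)
  · have := Gamma_pos_of_pos (show (0 : ℝ) < j + 1 by linarith)
    simp [this.ne']

theorem continuousAt_dualTerm (j : ℕ) : ContinuousAt (fun x => dualTerm x j) 0 := by
  have hj : (0 : ℝ) ≤ j := j.cast_nonneg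
  have hG : ∀ t : ℝ, 0 < t → ContinuousAt Gamma t := fun t ht =>
    (differentiableAt_Gamma fun m => by have : (0 : ℝ) ≤ m := m.cast_nonneg; linarith).continuousAt
  have e : ∀ a b : ℝ, 0 < a → ContinuousAt (fun x : ℝ => Gamma (j + (a - b * x))) 0 :=
    fun a b ha => ContinuousAt.comp (g := Gamma) (hG _ (by simp; linarith)) (by fun_prop)
  unfold dualTerm
  refine ContinuousAt.div (ContinuousAt.mul ?_ ?_) (continuousAt_const.mul ?_) ?_
  · exact e 1 2 (by norm_num)
  · simpa using e 1 1 (by norm_num)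
  · simpa using e (3 / 2) 1 (by norm_num)
  · have := Gamma_pos_of_pos (show (0 : ℝ) < j + 3 / 2 by linarith)
    simp [this.ne']

theorem tendsto_tsum_aux_sub_dual :
    Tendsto (fun x => ∑' j, (auxTerm x j - dualTerm x j)) (𝓝[>] 0)
      (𝓝 (∑' j, (auxTerm 0 j - dualTerm 0 j))) := by
  have h0 : Tendsto (auxTerm 0) atTop (𝓝 0) := tendsto_Gamma_ratio_zero (by norm_num)
  rw [Metric.tendsto_nhds]
  intro ε hε
  obtain ⟨N, hN⟩ := (h0.eventually (gt_mem_nhds (show 0 < ε / 3 by positivity))).exists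
  have hc : ContinuousAt (fun x => ∑ j ∈ Finset.range N, (auxTerm x j - dualTerm x j)) 0 :=
    tendsto_finsetSum _ fun j _ => (continuousAt_auxTerm j).sub (continuousAt_dualTerm j)
  have h1 := nhdsWithin_le_nhds (s := Set.Ioi 0)
    ((continuousAt_auxTerm N).eventually (gt_mem_nhds hN))
  have h2 := nhdsWithin_le_nhds (s := Set.Ioi 0)
    ((Metric.tendsto_nhds.1 hc) (ε / 3) (by positivity))
  filter_upwards [h1, h2, Ioo_mem_nhdsGT (show (0 : ℝ) < 1 / 8 by norm_num)] with x h1 h2 h3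
  have a1 := abs_tsum_aux_sub_dual_sub_le h3.1.le h3.2 N
  have a2 := abs_tsum_aux_sub_dual_sub_le le_rfl (show (0 : ℝ) < 1 / 8 by norm_num) N
  rw [Real.dist_eq] at h2 ⊢
  rw [abs_le] at a1 a2
  rw [abs_lt] at h2 ⊢
  constructor <;> linarith [a1.1, a1.2, a2.1, a2.2, h2.1, h2.2]

theorem Gamma_add_half_div_eq_integral (j : ℕ) :
    Gamma (j + 1 / 2) / Gamma (j + 1) = 2 / √π * ∫ t in (0 : ℝ)..π / 2, cos t ^ (2 * j) := by
  rw [EulerSine.integral_cos_pow_eq, integral_sin_pow_even]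
  have hp : √π ^ 2 = π := sq_sqrt pi_pos.le
  have p8 : 0 < √π := sqrt_pos.2 pi_pos
  induction j with
  | zero =>
    simp only [Nat.cast_zero, zero_add, Gamma_one, Gamma_one_half_eq, Finset.range_zero,
      Finset.prod_empty]
    field_simp
    linarith
  | succ j ih =>
    have hj : (0 : ℝ) ≤ j := j.cast_nonneg
    push_cast
    rw [show (j : ℝ) + 1 + 1 / 2 = (j + 1 / 2) + 1 by ring, Gamma_add_one (by positivity),
      Gamma_add_one (s := (j : ℝ) + 1) (by positivity), mul_div_mul_comm, ih,
      Finset.prod_range_succ, show ((j : ℝ) + 1 / 2) / (j + 1) = (2 * j + 1) / (2 * j + 2) by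
        field_simp]
    ring

theorem Gamma_div_add_three_halves_eq_integral (j : ℕ) :
    Gamma (j + 1) / Gamma (j + 3 / 2) =
      2 / √π * ∫ t in (0 : ℝ)..π / 2, cos t ^ (2 * j + 1) := by
  rw [EulerSine.integral_cos_pow_eq, integral_sin_pow_odd]
  have p8 : 0 < √π := sqrt_pos.2 pi_pos
  induction j with
  | zero =>
    simp only [Nat.cast_zero, zero_add, Gamma_one]
    rw [show (3 / 2 : ℝ) = 1 / 2 + 1 by norm_num, Gamma_add_one (by norm_num), Gamma_one_half_eq]
    simp only [Finset.range_zero, Finset.prod_empty]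
    field_simp
  | succ j ih =>
    have hj : (0 : ℝ) ≤ j := j.cast_nonneg
    push_cast
    rw [show (j : ℝ) + 1 + 3 / 2 = (j + 3 / 2) + 1 by ring,
      Gamma_add_one (s := (j : ℝ) + 3 / 2) (by positivity),
      Gamma_add_one (s := (j : ℝ) + 1) (by positivity), mul_div_mul_comm, ih,
      Finset.prod_range_succ, show ((j : ℝ) + 1) / (j + 3 / 2) = (2 * j + 2) / (2 * j + 3) by
        field_simp]
    ring

theorem auxTerm_zero_eq (j : ℕ) :
    auxTerm 0 j = 4 / π * (∫ t in (0 : ℝ)..π / 2, cos t ^ (2 * j)) ^ 2 := by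
  have h := Gamma_add_half_div_eq_integral j
  have hp : √π ^ 2 = π := sq_sqrt pi_pos.le
  calc auxTerm 0 j = (Gamma (j + 1 / 2) / Gamma (j + 1)) ^ 2 := by simp [auxTerm]; ring
    _ = _ := by rw [h, mul_pow, div_pow, hp]; norm_num

theorem dualTerm_zero_eq (j : ℕ) :
    dualTerm 0 j = 4 / π * (∫ t in (0 : ℝ)..π / 2, cos t ^ (2 * j + 1)) ^ 2 := by
  have h := Gamma_div_add_three_halves_eq_integral j
  have hp : √π ^ 2 = π := sq_sqrt pi_pos.le
  calc dualTerm 0 j = (Gamma (j + 1) / Gamma (j + 3 / 2)) ^ 2 := by simp [dualTerm]; ring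
    _ = _ := by rw [h, mul_pow, div_pow, hp]; norm_num

theorem sinc_pos_of_mem {t : ℝ} (h0 : 0 ≤ t) (h1 : t ≤ π / 2) : 0 < sinc t := by
  rcases h0.eq_or_lt with rfl | h
  · simp
  · rw [sinc_of_ne_zero h.ne']
    exact div_pos (sin_pos_of_pos_of_lt_pi h (by linarith [pi_pos])) h

theorem continuousOn_inv_sinc : ContinuousOn (fun t => (sinc t)⁻¹) (Set.uIcc 0 (π / 2)) := by
  rw [Set.uIcc_of_le (by positivity)]
  exact continuous_sinc.continuousOn.inv₀ fun t ht => (sinc_pos_of_mem ht.1 ht.2).ne'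

theorem integral_inv_one_add_cos_mul_cos {a : ℝ} (h0 : 0 < a) (h1 : a ≤ π / 2) :
    ∫ t in (0 : ℝ)..π / 2, (1 + cos a * cos t)⁻¹ = (sinc a)⁻¹ := by
  have hpi := pi_pos
  have hsa : 0 < sin (a / 2) := sin_pos_of_pos_of_lt_pi (by linarith) (by linarith)
  have hca : 0 < cos (a / 2) := cos_pos_of_mem_Ioo ⟨by linarith, by linarith⟩
  have hsin : sin a = 2 * sin (a / 2) * cos (a / 2) := by rw [← sin_two_mul]; ring_nf
  have hcos : cos a = 2 * cos (a / 2) ^ 2 - 1 := by rw [← cos_two_mul]; ring_nf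
  have hcosa : 0 ≤ cos a := cos_nonneg_of_mem_Icc ⟨by linarith, h1⟩
  have hD : ∀ t ∈ Set.uIcc 0 (π / 2), 0 < 1 + cos a * cos t := fun t ht => by
    rw [Set.uIcc_of_le (by positivity)] at ht
    have := cos_nonneg_of_mem_Icc (x := t) ⟨by linarith [ht.1], ht.2⟩
    positivity
  have hder : ∀ t ∈ Set.uIcc 0 (π / 2),
      HasDerivAt (fun t => 2 / sin a * arctan (tan (a / 2) * tan (t / 2)))
        ((1 + cos a * cos t)⁻¹) t := fun t ht => by
    have hDt := hD t ht
    rw [Set.uIcc_of_le (by positivity)] at ht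
    have hct : 0 < cos (t / 2) := cos_pos_of_mem_Ioo ⟨by linarith [ht.1], by linarith [ht.2]⟩
    have hcost : cos t = 2 * cos (t / 2) ^ 2 - 1 := by rw [← cos_two_mul]; ring_nf
    have h := ((((hasDerivAt_tan hct.ne').comp t ((hasDerivAt_id t).div_const 2)).const_mul
      (tan (a / 2))).arctan).const_mul (2 / sin a)
    refine h.congr_deriv ?_
    have e1 := sin_sq_add_cos_sq (a / 2)
    have e2 := sin_sq_add_cos_sq (t / 2)
    simp only [Function.comp, id]
    rw [hsin, tan_eq_sin_div_cos, tan_eq_sin_div_cos]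
    rw [hcos, hcost] at hDt ⊢
    generalize sin (a / 2) = s at *
    generalize cos (a / 2) = c at *
    generalize sin (t / 2) = s' at *
    generalize cos (t / 2) = c' at *
    have hq : 0 < c ^ 2 * c' ^ 2 + s ^ 2 * s' ^ 2 := by positivity
    have hq' : 1 + (s / c * (s' / c')) ^ 2 = (c ^ 2 * c' ^ 2 + s ^ 2 * s' ^ 2) / (c * c') ^ 2 := by
      field_simp
    have hq2 : 1 + (2 * c ^ 2 - 1) * (2 * c' ^ 2 - 1) = 2 * (c ^ 2 * c' ^ 2 + s ^ 2 * s' ^ 2) := by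
      rw [show s ^ 2 = 1 - c ^ 2 by linarith, show s' ^ 2 = 1 - c' ^ 2 by linarith]; ring
    rw [hq', hq2]
    field_simp
  have hinteg : IntervalIntegrable (fun t => (1 + cos a * cos t)⁻¹) volume 0 (π / 2) :=
    ContinuousOn.intervalIntegrable (ContinuousOn.inv₀ (by fun_prop) fun t ht => (hD t ht).ne')
  rw [intervalIntegral.integral_eq_sub_of_hasDerivAt hder hinteg, sinc_of_ne_zero h0.ne', inv_div,
    show π / 2 / 2 = π / 4 by ring, tan_pi_div_four, mul_one,
    arctan_tan (by linarith) (by linarith)]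
  simp

theorem abs_inv_sinc_sub_sum_le {a : ℝ} (h0 : 0 < a) (h1 : a ≤ π / 2) (M : ℕ) :
    |(sinc a)⁻¹ - ∑ n ∈ Finset.range M, (-1) ^ n * cos a ^ n *
      ∫ t in (0 : ℝ)..π / 2, cos t ^ n| ≤ cos a ^ M * ∫ t in (0 : ℝ)..π / 2, cos t ^ M := by
  have hpi := pi_pos
  have hcosa : 0 ≤ cos a := cos_nonneg_of_mem_Icc ⟨by linarith, h1⟩
  have hc : ∀ t ∈ Set.uIcc 0 (π / 2), 0 ≤ cos t := fun t ht => by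
    rw [Set.uIcc_of_le (by positivity)] at ht
    exact cos_nonneg_of_mem_Icc ⟨by linarith [ht.1], ht.2⟩
  have hD : ∀ t ∈ Set.uIcc 0 (π / 2), 1 ≤ 1 + cos a * cos t := fun t ht => by
    have := mul_nonneg hcosa (hc t ht); linarith
  have hinteg : IntervalIntegrable (fun t => (1 + cos a * cos t)⁻¹) volume 0 (π / 2) :=
    ContinuousOn.intervalIntegrable (ContinuousOn.inv₀ (by fun_prop) fun t ht => by
      have := hD t ht; positivity)
  have hs : ∑ n ∈ Finset.range M, (-1) ^ n * cos a ^ n * ∫ t in (0 : ℝ)..π / 2, cos t ^ n =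
      ∫ t in (0 : ℝ)..π / 2, ∑ n ∈ Finset.range M, (-(cos a * cos t)) ^ n := by
    rw [intervalIntegral.integral_finsetSum fun n _ =>
      Continuous.intervalIntegrable (by fun_prop) _ _]
    refine Finset.sum_congr rfl fun n _ => ?_
    rw [← intervalIntegral.integral_const_mul]
    congr 1; ext t; rw [neg_pow (cos a * cos t), mul_pow (cos a)]; ring
  rw [← integral_inv_one_add_cos_mul_cos h0 h1, hs,
    ← intervalIntegral.integral_sub hinteg (Continuous.intervalIntegrable (by fun_prop) _ _),
    ← intervalIntegral.integral_const_mul, ← Real.norm_eq_abs]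
  refine intervalIntegral.norm_integral_le_of_norm_le (by positivity) ?_
    (Continuous.intervalIntegrable (by fun_prop) _ _)
  refine ae_of_all _ fun t ht => ?_
  have ht' : t ∈ Set.uIcc 0 (π / 2) := by
    rw [Set.uIcc_of_le (by positivity)]; exact ⟨ht.1.le, ht.2⟩
  have h2 := hD t ht'
  have h3 := hc t ht'
  have hg := geom_sum_eq (x := -(cos a * cos t)) (by linarith) M
  have : (1 + cos a * cos t)⁻¹ - ∑ n ∈ Finset.range M, (-(cos a * cos t)) ^ n =
      (-(cos a * cos t)) ^ M * (1 + cos a * cos t)⁻¹ := by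
    rw [hg, show -(cos a * cos t) - 1 = -(1 + cos a * cos t) by ring]
    field_simp
    ring
  rw [this, norm_mul, norm_pow, norm_neg, Real.norm_of_nonneg (mul_nonneg hcosa h3), ← mul_pow,
    Real.norm_of_nonneg (by positivity)]
  exact mul_le_of_le_one_right (by positivity) (inv_le_one_of_one_le₀ h2)

theorem abs_integral_inv_sinc_sub_sum_le (M : ℕ) :
    |(∫ a in (0 : ℝ)..π / 2, (sinc a)⁻¹) - ∑ n ∈ Finset.range M, (-1) ^ n *
      (∫ t in (0 : ℝ)..π / 2, cos t ^ n) ^ 2| ≤ (∫ t in (0 : ℝ)..π / 2, cos t ^ M) ^ 2 := by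
  have hpi := pi_pos
  have hs : ∑ n ∈ Finset.range M, (-1) ^ n * (∫ t in (0 : ℝ)..π / 2, cos t ^ n) ^ 2 =
      ∫ a in (0 : ℝ)..π / 2, ∑ n ∈ Finset.range M, (-1) ^ n * cos a ^ n *
        ∫ t in (0 : ℝ)..π / 2, cos t ^ n := by
    rw [intervalIntegral.integral_finsetSum fun n _ =>
      Continuous.intervalIntegrable (by fun_prop) _ _]
    refine Finset.sum_congr rfl fun n _ => ?_
    rw [intervalIntegral.integral_mul_const, intervalIntegral.integral_const_mul]
    ring
  rw [hs, ← intervalIntegral.integral_sub continuousOn_inv_sinc.intervalIntegrable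
    (Continuous.intervalIntegrable (by fun_prop) _ _), sq,
    ← intervalIntegral.integral_mul_const, ← Real.norm_eq_abs]
  refine intervalIntegral.norm_integral_le_of_norm_le (by positivity) ?_
    (Continuous.intervalIntegrable (by fun_prop) _ _)
  exact ae_of_all _ fun a ha => abs_inv_sinc_sub_sum_le ha.1 ha.2 M

theorem tsum_aux_sub_dual_zero :
    ∑' j, (auxTerm 0 j - dualTerm 0 j) = 4 / π * ∫ a in (0 : ℝ)..π / 2, (sinc a)⁻¹ := by
  have hpi := pi_pos
  have hS := (summable_aux_sub_dual le_rfl (by norm_num)).hasSum.tendsto_sum_nat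
  refine tendsto_nhds_unique hS ?_
  have h0 : Tendsto (auxTerm 0) atTop (𝓝 0) := tendsto_Gamma_ratio_zero (by norm_num)
  rw [tendsto_iff_norm_sub_tendsto_zero]
  refine squeeze_zero (fun _ => norm_nonneg _) (fun N => ?_) h0
  have hsum : ∑ j ∈ Finset.range N, (auxTerm 0 j - dualTerm 0 j) =
      4 / π * ∑ n ∈ Finset.range (2 * N), (-1) ^ n * (∫ t in (0 : ℝ)..π / 2, cos t ^ n) ^ 2 := by
    induction N with
    | zero => simp
    | succ N ih =>
      rw [Finset.sum_range_succ, ih, Nat.mul_succ, Finset.sum_range_succ, Finset.sum_range_succ,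
        auxTerm_zero_eq, dualTerm_zero_eq, pow_succ (-1 : ℝ) (2 * N), pow_mul]
      norm_num
      ring
  rw [hsum, ← mul_sub, norm_mul, Real.norm_of_nonneg (by positivity), auxTerm_zero_eq, norm_sub_rev]
  exact mul_le_mul_of_nonneg_left (abs_integral_inv_sinc_sub_sum_le (2 * N)) (by positivity)

theorem integral_mul_sin_odd (n : ℕ) :
    ∫ a in (0 : ℝ)..π / 2, a * (2 * sin ((2 * n + 1) * a)) = 2 * ((-1) ^ n / (2 * n + 1) ^ 2) := by
  have hk : (2 * n + 1 : ℝ) ≠ 0 := by positivity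
  have hder : ∀ t ∈ Set.uIcc 0 (π / 2), HasDerivAt (fun t : ℝ =>
      2 * (sin ((2 * n + 1) * t) / (2 * n + 1) ^ 2 - t * cos ((2 * n + 1) * t) / (2 * n + 1)))
        (t * (2 * sin ((2 * n + 1) * t))) t := fun t _ => by
    have h1 : HasDerivAt (fun t : ℝ => (2 * n + 1) * t) ((2 * n + 1) * 1) t :=
      (hasDerivAt_id t).const_mul _
    have h := ((h1.sin.div_const ((2 * n + 1) ^ 2)).sub
      (((hasDerivAt_id t).mul h1.cos).div_const (2 * n + 1))).const_mul 2
    refine h.congr_deriv ?_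
    simp only [id]
    field_simp
    ring
  rw [intervalIntegral.integral_eq_sub_of_hasDerivAt hder
    (Continuous.intervalIntegrable (by fun_prop) _ _)]
  rw [show (2 * n + 1) * (π / 2) = π / 2 + n * π by ring, sin_add_nat_mul_pi, cos_add_nat_mul_pi]
  simp

theorem sum_two_mul_sin_odd (a : ℝ) (N : ℕ) :
    (∑ n ∈ Finset.range N, 2 * sin ((2 * n + 1) * a)) * sin a = 1 - cos (2 * N * a) := by
  induction N with
  | zero => simp
  | succ N ih =>
    rw [Finset.sum_range_succ, add_mul, ih]
    push_cast
    rw [show 2 * ((N : ℝ) + 1) * a = (2 * N + 1) * a + a by ring, cos_add,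
      show 2 * (N : ℝ) * a = (2 * N + 1) * a - a by ring, cos_sub]
    ring

theorem tendsto_integral_inv_sinc_mul_cos :
    Tendsto (fun N : ℕ => ∫ a in (0 : ℝ)..π / 2, (sinc a)⁻¹ * cos (2 * N * a)) atTop (𝓝 0) := by
  have hpi := pi_pos
  set f : ℝ → ℂ := (Set.Ioc 0 (π / 2)).indicator fun a => (((sinc a)⁻¹ : ℝ) : ℂ) with hf
  have h := Real.tendsto_integral_exp_smul_cocompact f
  have hw : Tendsto (fun N : ℕ => (N : ℝ) / π) atTop (cocompact ℝ) :=
    (tendsto_natCast_atTop_atTop.atTop_div_const hpi).mono_right atTop_le_cocompact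
  have h2 := (Complex.continuous_re.tendsto _).comp (h.comp hw)
  rw [Complex.zero_re] at h2
  refine h2.congr fun N => ?_
  have hinteg : IntegrableOn (fun a => (sinc a)⁻¹) (Set.Ioc 0 (π / 2)) := by
    have := continuousOn_inv_sinc.intervalIntegrable (μ := volume)
    rwa [intervalIntegrable_iff_integrableOn_Ioc_of_le (by positivity)] at this
  have e : ∀ v : ℝ, (Real.fourierChar (-(v * (N / π))) • f v) =
      (Set.Ioc 0 (π / 2)).indicator (fun a : ℝ =>
        Complex.exp (((-2 * N * a : ℝ) : ℂ) * Complex.I) * (((sinc a)⁻¹ : ℝ) : ℂ)) v := fun v => by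
    rw [hf, Set.indicator_apply, Set.indicator_apply]
    split_ifs
    · rw [Circle.smul_def, Real.fourierChar_apply, smul_eq_mul]
      congr 4
      field_simp
    · simp
  simp only [Function.comp, e]
  rw [integral_indicator measurableSet_Ioc, intervalIntegral.integral_of_le (by positivity)]
  have hint2 : IntegrableOn (fun a : ℝ =>
        Complex.exp (((-2 * N * a : ℝ) : ℂ) * Complex.I) * (((sinc a)⁻¹ : ℝ) : ℂ))
        (Set.Ioc 0 (π / 2)) := by
    refine Integrable.bdd_mul (c := 1) hinteg.ofReal (Continuous.aestronglyMeasurable (by fun_prop))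
      (ae_of_all _ fun a => ?_)
    rw [Complex.norm_exp_ofReal_mul_I]
  have := integral_re hint2
  simp only [RCLike.re_to_complex] at this
  rw [← this]
  congr 1
  ext a
  rw [Complex.re_mul_ofReal, Complex.exp_ofReal_mul_I_re, mul_comm,
    show -2 * (N : ℝ) * a = -(2 * N * a) by ring, cos_neg]

theorem tsum_catalan_eq_integral :
    ∑' n : ℕ, (-1 : ℝ) ^ n / (2 * (n : ℝ) + 1) ^ 2 = (∫ a in (0 : ℝ)..π / 2, (sinc a)⁻¹) / 2 := by
  have hpi := pi_pos
  have hsum : Summable fun n : ℕ => (-1 : ℝ) ^ n / (2 * (n : ℝ) + 1) ^ 2 := by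
    have h := (summable_nat_add_iff 1).2 (Real.summable_one_div_nat_pow.2 (show 1 < 2 by norm_num))
    refine Summable.of_norm_bounded h fun n => ?_
    rw [norm_div, norm_pow, norm_neg, norm_one, one_pow, Real.norm_of_nonneg (by positivity)]
    push_cast
    gcongr
    linarith [n.cast_nonneg (α := ℝ)]
  refine tendsto_nhds_unique hsum.hasSum.tendsto_sum_nat ?_
  have h := (tendsto_integral_inv_sinc_mul_cos.const_sub
    (∫ a in (0 : ℝ)..π / 2, (sinc a)⁻¹)).div_const 2
  rw [sub_zero] at h
  refine h.congr fun N => ?_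
  have hinteg := continuousOn_inv_sinc.intervalIntegrable (μ := volume)
  have hint2 : IntervalIntegrable (fun a => (sinc a)⁻¹ * cos (2 * N * a)) volume 0 (π / 2) :=
    (continuousOn_inv_sinc.mul (by fun_prop)).intervalIntegrable
  rw [← intervalIntegral.integral_sub hinteg hint2, div_eq_iff two_ne_zero, Finset.sum_mul]
  simp only [mul_comm (_ / _) (2 : ℝ), ← integral_mul_sin_odd]
  rw [← intervalIntegral.integral_finsetSum fun n _ =>
    Continuous.intervalIntegrable (by fun_prop) _ _]
  refine intervalIntegral.integral_congr_ae (ae_of_all _ fun a ha => ?_)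
  rw [Set.uIoc_of_le (by positivity)] at ha
  have hs := sin_pos_of_pos_of_lt_pi ha.1 (by linarith [ha.2])
  have := sum_two_mul_sin_odd a N
  rw [← Finset.mul_sum, sinc_of_ne_zero ha.1.ne', inv_div, ← mul_one_sub, ← this]
  field_simp

theorem tsum_aux_sub_dual_zero_eq_catalan :
    ∑' j, (auxTerm 0 j - dualTerm 0 j) =
      8 / π * ∑' n : ℕ, (-1 : ℝ) ^ n / (2 * (n : ℝ) + 1) ^ 2 := by
  rw [tsum_aux_sub_dual_zero, tsum_catalan_eq_integral]
  ring

/-- The hypergeometric weight of the series, without sign and linear factor. -/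
noncomputable def hypWeight (t : ℝ) : ℝ :=
  (2 : ℝ) ^ (-(2 : ℝ) * t) *
    (pochG (1 / 2) t * pochG (1 / 4) t * pochG (3 / 4) t / pochG 1 t ^ 3)

/-- The complex extension of `hypWeight`. -/
noncomputable def hypWeightC (z : ℂ) : ℂ :=
  (2 : ℂ) ^ (-(2 : ℂ) * z) *
    (Complex.Gamma (1 / 2 + z) / Complex.Gamma (1 / 2) *
      (Complex.Gamma (1 / 4 + z) / Complex.Gamma (1 / 4)) *
      (Complex.Gamma (3 / 4 + z) / Complex.Gamma (3 / 4)) /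
      (Complex.Gamma (1 + z) / Complex.Gamma 1) ^ 3)

/-- The ratio of consecutive signed weights. -/
noncomputable def weightRatio (z : ℂ) : ℂ :=
  -(1 / 4) * ((z + 1 / 2) * (z + 1 / 4) * (z + 3 / 4) / (z + 1) ^ 3)

theorem hypWeightC_ofReal (t : ℝ) : hypWeightC t = hypWeight t := by
  simp only [hypWeightC, hypWeight, pochG]
  push_cast [Complex.ofReal_cpow (show (0 : ℝ) ≤ 2 by norm_num), ← Complex.Gamma_ofReal]
  rfl

theorem hypWeight_add_one {t : ℝ} (ht : -1 / 8 < t) :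
    hypWeight (t + 1) =
      hypWeight t * (1 / 4 * ((t + 1 / 2) * (t + 1 / 4) * (t + 3 / 4) / (t + 1) ^ 3)) := by
  have e : ∀ a : ℝ, 1 / 4 ≤ a → pochG a (t + 1) = (t + a) * pochG a t := fun a ha => by
    rw [pochG, pochG, show a + (t + 1) = (t + a) + 1 by ring, Gamma_add_one (by linarith),
      add_comm a t, mul_div_assoc]
  have h2 : (2 : ℝ) ^ (-(2 : ℝ) * (t + 1)) = (2 : ℝ) ^ (-(2 : ℝ) * t) * (1 / 4) := by
    rw [mul_add, rpow_add (by norm_num)]; norm_num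
  rw [hypWeight, hypWeight, e _ (by norm_num), e _ (by norm_num), e _ (by norm_num),
    e _ (by norm_num), h2, mul_pow]
  simp only [div_eq_mul_inv, mul_inv]
  ring

theorem ofReal_signed_weight {x : ℝ} (hx : -1 / 8 < x) (n : ℕ) :
    (((-1) ^ n * hypWeight (n + x) : ℝ) : ℂ) =
      hypWeightC x * ∏ i ∈ Finset.range n, weightRatio (i + x) := by
  induction n with
  | zero => simp [hypWeightC_ofReal]
  | succ n ih =>
    have hn : (0 : ℝ) ≤ n := n.cast_nonneg
    rw [Finset.prod_range_succ, ← mul_assoc, ← ih,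
      show ((n + 1 : ℕ) : ℝ) + x = (n + x) + 1 by push_cast; ring,
      hypWeight_add_one (by linarith), weightRatio]
    push_cast
    ring

theorem norm_weightRatio_le {z : ℂ} (hz : -1 / 8 ≤ z.re) : ‖weightRatio z‖ ≤ 1 / 4 := by
  have key : ∀ a : ℝ, 1 / 4 ≤ a → a ≤ 1 → ‖z + a‖ ≤ ‖z + 1‖ := fun a h1 h2 => by
    rw [Complex.norm_def, Complex.norm_def]
    refine Real.sqrt_le_sqrt ?_
    simp only [Complex.normSq_apply, Complex.add_re, Complex.add_im, Complex.ofReal_re,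
      Complex.ofReal_im, Complex.one_re, Complex.one_im]
    nlinarith
  have hpos : 0 < ‖z + 1‖ := norm_pos_iff.2 fun h => by
    have := congrArg Complex.re h
    simp at this
    linarith
  have k1 := key (1 / 2) (by norm_num) (by norm_num)
  have k2 := key (1 / 4) (by norm_num) (by norm_num)
  have k3 := key (3 / 4) (by norm_num) (by norm_num)
  push_cast at k1 k2 k3
  rw [weightRatio, norm_mul, norm_div, norm_mul, norm_mul, norm_pow]
  have h4 : ‖(-(1 / 4) : ℂ)‖ = 1 / 4 := by norm_num
  rw [h4]
  refine mul_le_of_le_one_right (by norm_num) ?_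
  rw [div_le_one (by positivity)]
  calc _ ≤ ‖z + 1‖ * ‖z + 1‖ * ‖z + 1‖ := by gcongr
    _ = _ := by ring

/-- The normalised series. -/
noncomputable def weightSeries (z : ℂ) (n : ℕ) : ℂ :=
  (∏ i ∈ Finset.range n, weightRatio (i + z)) * (20 * (n + z) + 3)

theorem norm_weightSeries_le {z : ℂ} (hz : ‖z‖ < 1 / 8) (n : ℕ) :
    ‖weightSeries z n‖ ≤ (20 * n + 23) * (1 / 4) ^ n := by
  have hre : -1 / 8 ≤ z.re := by have := (abs_le.1 (Complex.abs_re_le_norm z)).1; linarith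
  have h1 : ‖∏ i ∈ Finset.range n, weightRatio (i + z)‖ ≤ (1 / 4) ^ n := by
    rw [norm_prod]
    have h := Finset.prod_le_prod (s := Finset.range n) (g := fun _ => (1 / 4 : ℝ))
      (fun i _ => norm_nonneg (weightRatio (i + z))) fun i _ => norm_weightRatio_le (z := i + z) ?_
    · simpa using h
    simp only [Complex.add_re, Complex.natCast_re]
    linarith [i.cast_nonneg (α := ℝ)]
  have h2 : ‖(20 * (n + z) + 3 : ℂ)‖ ≤ 20 * n + 23 := by
    calc ‖(20 * (n + z) + 3 : ℂ)‖ ≤ ‖(20 : ℂ)‖ * (‖(n : ℂ)‖ + ‖z‖) + ‖(3 : ℂ)‖ := by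
          refine (norm_add_le _ _).trans ?_
          rw [norm_mul]
          gcongr
          exact norm_add_le _ _
      _ ≤ _ := by
        rw [Complex.norm_natCast]
        norm_num
        linarith
  rw [weightSeries, norm_mul, mul_comm]
  gcongr

theorem summable_weight_bound : Summable fun n : ℕ => (20 * (n : ℝ) + 23) * (1 / 4) ^ n := by
  have h1 := summable_pow_mul_geometric_of_norm_lt_one 1 (show ‖(1 / 4 : ℝ)‖ < 1 by norm_num)
  have h2 := summable_geometric_of_norm_lt_one (show ‖(1 / 4 : ℝ)‖ < 1 by norm_num)
  refine ((h1.mul_left 20).add (h2.mul_left 23)).congr fun n => ?_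
  ring

theorem differentiableOn_weightRatio (i : ℕ) :
    DifferentiableOn ℂ (fun z : ℂ => weightRatio (i + z)) (Metric.ball 0 (1 / 8)) := by
  unfold weightRatio
  refine DifferentiableOn.const_mul (DifferentiableOn.div (by fun_prop) (by fun_prop) ?_) _
  intro z hz h
  rw [mem_ball_zero_iff] at hz
  have := congrArg Complex.re (pow_eq_zero_iff (three_ne_zero) |>.1 h)
  simp at this
  have h3 := (abs_le.1 (Complex.abs_re_le_norm z)).1
  linarith [i.cast_nonneg (α := ℝ)]

theorem analyticAt_tsum_weightSeries :
    AnalyticAt ℂ (fun z => ∑' n, weightSeries z n) 0 := by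
  have hd : DifferentiableOn ℂ (fun z => ∑' n, weightSeries z n) (Metric.ball 0 (1 / 8)) := by
    refine Complex.differentiableOn_tsum_of_summable_norm summable_weight_bound (fun n => ?_)
      Metric.isOpen_ball fun n z hz => norm_weightSeries_le (mem_ball_zero_iff.1 hz) n
    unfold weightSeries
    refine DifferentiableOn.mul ?_ (by fun_prop)
    exact DifferentiableOn.fun_finsetProd fun i _ => differentiableOn_weightRatio i
  exact hd.analyticAt (Metric.ball_mem_nhds 0 (by norm_num))

theorem analyticAt_hypWeightC : AnalyticAt ℂ hypWeightC 0 := by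
  have hne : ∀ {a : ℝ}, 1 / 4 ≤ a → ∀ {z : ℂ}, z ∈ Metric.ball (0 : ℂ) (1 / 8) → ∀ m : ℕ,
      (a + z : ℂ) ≠ -m := fun {a} ha {z} hz m h => by
    rw [mem_ball_zero_iff] at hz
    have := congrArg Complex.re h
    simp at this
    have h3 := (abs_le.1 (Complex.abs_re_le_norm z)).1
    linarith [m.cast_nonneg (α := ℝ)]
  have e : ∀ a : ℝ, 1 / 4 ≤ a →
      DifferentiableOn ℂ (fun z : ℂ => Complex.Gamma (a + z)) (Metric.ball 0 (1 / 8)) :=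
    fun a ha z hz => ((Complex.differentiableAt_Gamma _ (hne ha hz)).comp z
      (by fun_prop)).differentiableWithinAt
  have hd : DifferentiableOn ℂ hypWeightC (Metric.ball 0 (1 / 8)) := by
    unfold hypWeightC
    refine DifferentiableOn.mul ?_ (DifferentiableOn.div (DifferentiableOn.mul
      (DifferentiableOn.mul ?_ ?_) ?_) (DifferentiableOn.pow ?_ 3) ?_)
    · exact fun z _ => (DifferentiableAt.const_cpow (by fun_prop)
        (Or.inl two_ne_zero)).differentiableWithinAt
    · simpa using (e (1 / 2) (by norm_num)).div_const _
    · simpa using (e (1 / 4) (by norm_num)).div_const _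
    · simpa using (e (3 / 4) (by norm_num)).div_const _
    · simpa using (e 1 (by norm_num)).div_const (Complex.Gamma 1)
    · intro z hz
      have := Complex.Gamma_ne_zero (hne (a := 1) (by norm_num) hz)
      rw [Complex.ofReal_one] at this
      simp [this]
  exact hd.analyticAt (Metric.ball_mem_nhds 0 (by norm_num))

theorem hasSum_signed_weight {x : ℝ} (hx : |x| < 1 / 8) :
    HasSum (fun n : ℕ => (((-1) ^ n * hypWeight (n + x) * (20 * (n + x) + 3) : ℝ) : ℂ))
      (hypWeightC x * ∑' n, weightSeries x n) := by
  have hx' : ‖(x : ℂ)‖ < 1 / 8 := by simpa using hx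
  have h := (Summable.of_norm_bounded summable_weight_bound
    (norm_weightSeries_le hx')).hasSum.mul_left (hypWeightC x)
  refine h.congr_fun fun n => ?_
  rw [weightSeries, ← mul_assoc, ← ofReal_signed_weight (by linarith [(abs_lt.1 hx).1])]
  push_cast
  ring

theorem summable_signed_weight {x : ℝ} (hx : |x| < 1 / 8) :
    Summable fun n : ℕ => (-1) ^ n * hypWeight (n + x) * (20 * (n + x) + 3) :=
  Complex.summable_ofReal.1 (hasSum_signed_weight hx).summable

theorem ofReal_tsum_signed_weight {x : ℝ} (hx : |x| < 1 / 8) :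
    ((∑' n : ℕ, (-1) ^ n * hypWeight (n + x) * (20 * (n + x) + 3) : ℝ) : ℂ) =
      hypWeightC x * ∑' n, weightSeries x n := by
  rw [Complex.ofReal_tsum]
  exact (hasSum_signed_weight hx).tsum_eq

theorem exists_cubic_expansion :
    ∃ a b c d : ℝ, (fun x : ℝ =>
      ∑' n : ℕ, (-1) ^ n * hypWeight (n + x) * (20 * (n + x) + 3) -
        (a + b * x + c * x ^ 2 + d * x ^ 3)) =O[𝓝 0] fun x => x ^ 4 := by
  obtain ⟨p, hp⟩ := analyticAt_hypWeightC.mul analyticAt_tsum_weightSeries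
  have h := hp.isBigO_sub_partialSum_pow 4
  have hc : Tendsto (fun x : ℝ => (x : ℂ)) (𝓝 0) (𝓝 0) := by
    simpa using Complex.continuous_ofReal.tendsto 0
  have h2 := h.comp_tendsto hc
  refine ⟨(p.coeff 0).re, (p.coeff 1).re, (p.coeff 2).re, (p.coeff 3).re, ?_⟩
  refine Asymptotics.IsBigO.trans ?_ (h2.trans (Asymptotics.isBigO_of_le _ fun x => ?_))
  · refine Asymptotics.IsBigO.of_bound 1 ?_
    filter_upwards [Metric.ball_mem_nhds (0 : ℝ) (show (0 : ℝ) < 1 / 8 by norm_num)] with x hx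
    rw [mem_ball_zero_iff, Real.norm_eq_abs] at hx
    rw [one_mul]
    refine le_trans (le_of_eq ?_) (Complex.abs_re_le_norm _)
    rw [Real.norm_eq_abs]
    congr 1
    simp only [Function.comp, zero_add, Pi.mul_apply]
    rw [← ofReal_tsum_signed_weight hx]
    simp only [FormalMultilinearSeries.partialSum, Finset.sum_range_succ, Finset.sum_range_zero,
      FormalMultilinearSeries.apply_eq_pow_smul_coeff, Complex.sub_re, Complex.ofReal_re,
      zero_add, Complex.add_re, smul_eq_mul, ← Complex.ofReal_pow, Complex.re_ofReal_mul]
    ring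
  · simp

theorem pi_mul_tsum_signed_weight {x : ℝ} (hx : 0 < x) (hx' : x < 1 / 8) :
    π ^ 2 * √π / 8 * ∑' n : ℕ, (-1) ^ n * hypWeight (n + x) * (20 * (n + x) + 3) =
      auxFactor x * ∑' k, auxTerm x k := by
  have hs := (summable_signed_weight (abs_lt.2 ⟨by linarith, hx'⟩)).hasSum.mul_left
    (π ^ 2 * √π / 8)
  have e : (fun n : ℕ => π ^ 2 * √π / 8 * ((-1) ^ n * hypWeight (n + x) * (20 * (n + x) + 3))) =
      fun n : ℕ => (-1) ^ n * wzCompanion (n + x) 0 := by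
    ext n
    rw [wzCompanion_zero (by positivity), hypWeight]
    simp only [pochG]
    ring
  rw [e] at hs
  exact hs.unique (hasSum_wzCompanion hx hs.summable)

/-- The cubic correction factor in the functional equation of the series. -/
noncomputable def cubicFactor (x : ℝ) : ℝ :=
  4 * π * (Gamma (1 / 2 + 2 * x) * Gamma (1 / 2 + x) ^ 2 / (Gamma (1 + 2 * x) * (π * √π))) *
    sinc (π * x) ^ 2 * cos (π * x) * ∑' j, (auxTerm x j - dualTerm x j)

theorem tsum_signed_weight_mul {x : ℝ} (hx : 0 < x) (hx' : x < 1 / 8) :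
    (1 / 8 * ∑' n : ℕ, (-1) ^ n * hypWeight (n + x) * (20 * (n + x) + 3)) *
      ((2 - cos (2 * (π * x))) * cos (π * x)) = 1 / π + x ^ 3 * cubicFactor x := by
  have hpi := pi_pos
  have p8 : 0 < √π := sqrt_pos.2 pi_pos
  have h1 := pi_mul_tsum_signed_weight hx hx'
  have h2 := bilateral_sum hx hx'
  have h3 := (summable_auxTerm hx).tsum_sub (summable_dualTerm hx)
  have hM : auxFactor x =
      2 * x * (Gamma (1 / 2 + 2 * x) * Gamma (1 / 2 + x) ^ 2 / Gamma (1 + 2 * x)) := by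
    have hg := Gamma_pos_of_pos (show 0 < 2 * x by linarith)
    rw [auxFactor, add_comm 1 (2 * x), Gamma_add_one (by linarith)]
    generalize Gamma (2 * x) = g at *
    have := hg.ne'
    have := hx.ne'
    field_simp
  have hsin : sin (π * x) = π * x * sinc (π * x) := by
    rw [sinc_of_ne_zero (by positivity)]; field_simp
  have hcos : cos (2 * (π * x)) = 1 - 2 * sin (π * x) ^ 2 := by
    rw [cos_two_mul]; linarith [sin_sq_add_cos_sq (π * x)]
  have hmain : (1 / 8 * ∑' n : ℕ, (-1) ^ n * hypWeight (n + x) * (20 * (n + x) + 3)) *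
      ((2 - cos (2 * (π * x))) * cos (π * x)) * (π ^ 2 * √π) =
      (1 / π + x ^ 3 * cubicFactor x) * (π ^ 2 * √π) := by
    have hk : x ^ 3 * cubicFactor x * (π ^ 2 * √π) = auxFactor x * (2 * sin (π * x) ^ 2) *
        cos (π * x) * ∑' j, (auxTerm x j - dualTerm x j) := by
      rw [cubicFactor, hM, hsin, ← div_div _ _ (π * √π)]
      generalize Gamma (1 / 2 + 2 * x) * Gamma (1 / 2 + x) ^ 2 / Gamma (1 + 2 * x) = g
      field_simp
      ring
    have hp : 1 / π * (π ^ 2 * √π) = π * √π := by field_simp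
    rw [add_mul, hk, hp, h3, hcos]
    linear_combination (1 + 2 * sin (π * x) ^ 2) * cos (π * x) * h1 + h2
  exact mul_right_cancel₀ (by positivity) hmain

theorem tendsto_cubicFactor : Tendsto cubicFactor (𝓝[>] 0) (𝓝 (32 * catalan')) := by
  have hpi := pi_pos
  have p8 : 0 < √π := sqrt_pos.2 pi_pos
  have hG : ∀ t : ℝ, 0 < t → ContinuousAt Gamma t := fun t ht =>
    (differentiableAt_Gamma fun m => by have : (0 : ℝ) ≤ m := m.cast_nonneg; linarith).continuousAt
  have e : ∀ a b : ℝ, 0 < a → ContinuousAt (fun x : ℝ => Gamma (a + b * x)) 0 :=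
    fun a b ha => ContinuousAt.comp (g := Gamma) (hG _ (by simp; linarith)) (by fun_prop)
  have c1 := e (1 / 2) 2 (by norm_num)
  have c2 := e (1 / 2) 1 (by norm_num)
  have c3 := e 1 2 (by norm_num)
  simp only [one_mul] at c2
  have c4 : ContinuousAt (fun x => sinc (π * x)) 0 :=
    (continuous_sinc.comp (continuous_const.mul continuous_id)).continuousAt
  have c5 : ContinuousAt (fun x => 4 * π *
      (Gamma (1 / 2 + 2 * x) * Gamma (1 / 2 + x) ^ 2 / (Gamma (1 + 2 * x) * (π * √π))) *
      sinc (π * x) ^ 2 * cos (π * x)) 0 := by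
    refine ((continuousAt_const.mul (((c1.mul (c2.pow 2)).div (c3.mul continuousAt_const) ?_))).mul
      (c4.pow 2)).mul (by fun_prop)
    have := Gamma_pos_of_pos (show (0 : ℝ) < 1 + 2 * 0 by norm_num)
    exact mul_ne_zero this.ne' (by positivity)
  have h := (c5.tendsto.mono_left nhdsWithin_le_nhds).mul tendsto_tsum_aux_sub_dual
  have hl : 4 * π * (Gamma (1 / 2 + 2 * 0) * Gamma (1 / 2 + 0) ^ 2 /
      (Gamma (1 + 2 * 0) * (π * √π))) * sinc (π * 0) ^ 2 * cos (π * 0) *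
        ∑' j, (auxTerm 0 j - dualTerm 0 j) = 32 * catalan' := by
    have p9 : √π ^ 2 = π := sq_sqrt pi_pos.le
    rw [tsum_aux_sub_dual_zero_eq_catalan, ← catalan']
    simp only [mul_zero, add_zero, Gamma_one, Gamma_one_half_eq, p9, sinc_zero, cos_zero]
    field_simp
    ring
  rw [hl] at h
  exact h

theorem cos_sub_isBigO : (fun y : ℝ => cos y - (1 - y ^ 2 / 2)) =O[𝓝 0] fun y => y ^ 4 := by
  refine IsBigO.of_bound (5 / 96) ?_
  filter_upwards [Metric.closedBall_mem_nhds (0 : ℝ) one_pos] with y hy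
  rw [mem_closedBall_zero_iff, Real.norm_eq_abs] at hy
  rw [Real.norm_eq_abs, norm_pow, Real.norm_eq_abs, mul_comm]
  exact cos_bound hy

theorem pow_four_isLittleO : (fun x : ℝ => x ^ 4) =o[𝓝 0] fun x => x ^ 3 :=
  isLittleO_pow_pow (by norm_num)

theorem cos_mul_sub_isLittleO :
    (fun x : ℝ => (2 - cos (2 * (π * x))) * cos (π * x) - (1 + 3 / 2 * π ^ 2 * x ^ 2)) =o[𝓝 0]
      fun x => x ^ 3 := by
  have key : ∀ c : ℝ, (fun x : ℝ => cos (c * x) - (1 - (c * x) ^ 2 / 2)) =o[𝓝 0]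
      fun x => x ^ 3 := fun c => by
    have hc : Tendsto (fun x : ℝ => c * x) (𝓝 0) (𝓝 0) := by
      simpa using (tendsto_id (x := 𝓝 (0 : ℝ))).const_mul c
    refine ((cos_sub_isBigO.comp_tendsto hc).trans ?_).trans_isLittleO pow_four_isLittleO
    refine IsBigO.of_bound (|c| ^ 4) (Eventually.of_forall fun x => ?_)
    simp [mul_pow]
  have h1 := key π
  have h2 := key (2 * π)
  have b : ∀ g : ℝ → ℝ, ContinuousAt g 0 → g =O[𝓝 0] fun _ => (1 : ℝ) := fun g hg =>
    hg.tendsto.isBigO_one ℝ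
  have t1 := (b (fun x => 1 + 2 * (π * x) ^ 2) (by fun_prop)).mul_isLittleO h1
  have t2 := (b (fun x => cos (π * x)) (by fun_prop)).mul_isLittleO h2
  have t3 := (b (fun _ => -π ^ 4) (by fun_prop)).mul_isLittleO pow_four_isLittleO
  simp only [one_mul] at t1 t2 t3
  refine ((t1.sub t2).add t3).congr_left fun x => ?_
  rw [← mul_assoc]
  ring

theorem tsum_signed_weight_sub_isLittleO :
    (fun x : ℝ => 1 / 8 * ∑' n : ℕ, (-1) ^ n * hypWeight (n + x) * (20 * (n + x) + 3) -
      (1 / π - 3 / 2 * π * x ^ 2 + 32 * catalan' * x ^ 3)) =o[𝓝[>] 0] fun x => x ^ 3 := by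
  have hpi := pi_pos
  have b : ∀ g : ℝ → ℝ, ContinuousAt g 0 → g =O[𝓝[>] 0] fun _ => (1 : ℝ) := fun g hg =>
    (hg.tendsto.mono_left nhdsWithin_le_nhds).isBigO_one ℝ
  have hR := cos_mul_sub_isLittleO.mono (nhdsWithin_le_nhds (s := Set.Ioi 0))
  have h4 := pow_four_isLittleO.mono (nhdsWithin_le_nhds (s := Set.Ioi 0))
  have t1 := (isBigO_refl (fun x : ℝ => x ^ 3) (𝓝[>] 0)).mul_isLittleO
    ((isLittleO_one_iff ℝ).2 (tendsto_sub_nhds_zero_iff.2 tendsto_cubicFactor))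
  have t2 := (b (fun x => 1 / π - 3 / 2 * π * x ^ 2 + 32 * catalan' * x ^ 3)
    (by fun_prop)).mul_isLittleO hR
  have t3 := (b (fun x => 3 / 2 * π ^ 2 * (-(3 / 2 * π) + 32 * catalan' * x))
    (by fun_prop)).mul_isLittleO h4
  have hC : ContinuousAt (fun x : ℝ => (2 - cos (2 * (π * x))) * cos (π * x)) 0 := by fun_prop
  have hC0 : (2 - cos (2 * (π * 0))) * cos (π * 0) ≠ 0 := by norm_num
  have t4 := (b (fun x => ((2 - cos (2 * (π * x))) * cos (π * x))⁻¹) (hC.inv₀ hC0)).mul_isLittleO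
    ((t1.sub (t2.congr_right fun x => by ring)).sub
    (t3.congr_right fun x => by ring))
  refine (t4.congr' ?_ (Eventually.of_forall fun x => by ring))
  filter_upwards [nhdsWithin_le_nhds (hC.eventually_ne hC0),
    Ioo_mem_nhdsGT (show (0 : ℝ) < 1 / 8 by norm_num)] with x hx hx'
  have h := tsum_signed_weight_mul hx'.1 hx'.2
  rw [inv_mul_eq_iff_eq_mul₀ hx]
  have hp : π * π⁻¹ = 1 := mul_inv_cancel₀ hpi.ne'
  simp only [one_div] at h ⊢
  linear_combination -h + 3 / 2 * π * x ^ 2 * hp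

theorem cubic_coeff_eq_zero {a b c d : ℝ}
    (h : (fun x : ℝ => a + b * x + c * x ^ 2 + d * x ^ 3) =o[𝓝[>] 0] fun x => x ^ 3) :
    a = 0 ∧ b = 0 ∧ c = 0 ∧ d = 0 := by
  have hT := h.tendsto_div_nhds_zero
  have key : ∀ (m : ℕ) (g : ℝ → ℝ), ContinuousAt g 0 →
      (∀ x : ℝ, 0 < x → (a + b * x + c * x ^ 2 + d * x ^ 3) / x ^ 3 * x ^ m = g x) →
      ∀ v, g 0 = v → v = 0 := fun m g hg hx v hv => by
    rw [← hv]
    have hm : Tendsto (fun x : ℝ => x ^ m) (𝓝[>] 0) (𝓝 (0 ^ m)) :=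
      ((continuous_pow m).tendsto 0).mono_left nhdsWithin_le_nhds
    have h1 := hT.mul hm
    rw [zero_mul] at h1
    refine tendsto_nhds_unique (hg.tendsto.mono_left nhdsWithin_le_nhds) (h1.congr' ?_)
    filter_upwards [self_mem_nhdsWithin] with x hx'
    exact hx x hx'
  have ha : a = 0 := by
    refine key 3 (fun x => a + b * x + c * x ^ 2 + d * x ^ 3) (by fun_prop)
      (fun x hx => ?_) a (by simp)
    field_simp
  have hb : b = 0 := by
    refine key 2 (fun x => b + c * x + d * x ^ 2) (by fun_prop)
      (fun x hx => ?_) b (by simp)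
    rw [ha]
    field_simp
    ring
  have hc : c = 0 := by
    refine key 1 (fun x => c + d * x) (by fun_prop)
      (fun x hx => ?_) c (by simp)
    rw [ha, hb]
    field_simp
    ring
  have hd : d = 0 := by
    refine key 0 (fun _ => d) (by fun_prop)
      (fun x hx => ?_) d (by simp)
    rw [ha, hb, hc]
    field_simp
    ring
  exact ⟨ha, hb, hc, hd⟩

end

/-- As `x → 0`,
`(1/8) ∑_{n≥0} (-1)^n 2^{-2(n+x)} (1/2)_{n+x}(1/4)_{n+x}(3/4)_{n+x}/(1)_{n+x}³ (20(n+x)+3)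
 = 1/π - (3/2)π x² + 32 G x³ + O(x⁴)`. -/
theorem identity3_expansion :
    (fun x : ℝ =>
      (1/8 : ℝ) * (∑' n : ℕ,
          (-1 : ℝ) ^ n * (2 : ℝ) ^ (-(2 : ℝ) * ((n : ℝ) + x)) *
            (pochG (1/2) ((n : ℝ) + x) * pochG (1/4) ((n : ℝ) + x) *
              pochG (3/4) ((n : ℝ) + x) / pochG 1 ((n : ℝ) + x) ^ 3) *
            (20 * ((n : ℝ) + x) + 3))
        - (1 / Real.pi - (3/2) * Real.pi * x ^ 2 + 32 * catalan' * x ^ 3))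
      =O[nhds 0] (fun x : ℝ => x ^ 4) := by
  obtain ⟨a, b, c, d, h⟩ := exists_cubic_expansion
  have h1 := h.const_mul_left (1 / 8)
  have h2 := tsum_signed_weight_sub_isLittleO.sub
    ((h1.trans_isLittleO pow_four_isLittleO).mono nhdsWithin_le_nhds)
  obtain ⟨ha, hb, hc, hd⟩ := cubic_coeff_eq_zero (a := a / 8 - 1 / Real.pi) (b := b / 8)
    (c := c / 8 + 3 / 2 * Real.pi) (d := d / 8 - 32 * catalan')
    (h2.congr_left fun x => by ring)
  refine h1.congr_left fun x => ?_
  simp only [hypWeight, ← mul_assoc (_ ^ _ : ℝ) ((2 : ℝ) ^ (_ : ℝ))]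
  linear_combination -ha - hb * x - hc * x ^ 2 - hd * x ^ 3
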